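/- For every integer m ≥ 2, if ∫_{[−π,π]²} f(x,y)^m dx dy < ∞ (i.e., the L^m norm of f is finite), then the (2m)-th moment of the limiting spectral distribution is finite: ∫_ℝ x^{2m} μ_f(dx) < ∞. -/

import Mathlib

open MeasureTheory ProbabilityTheory Filter Real

noncomputable section

/-- The square `(-π, π]²` on which the spectral measure lives. -/
def specBox : Set (ℝ × ℝ) := Set.Ioc (-π) π ×ˢ Set.Ioc (-π) π

/-- `(1/N) ∑_j g(λ_j(A))`, the integral of `g` against the empirical spectral
distribution of a symmetric `N × N` real matrix `A` (junk value `0` if `A` is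
not symmetric). -/
def esdEval {N : ℕ} (A : Matrix (Fin N) (Fin N) ℝ) (g : ℝ → ℝ) : ℝ :=
  if hA : A.IsHermitian then (N : ℝ)⁻¹ * ∑ j, g (hA.eigenvalues j) else 0

/-- The (random) empirical spectral distributions of `A N` converge weakly in
probability to the probability measure `μ`: for every bounded continuous `g`,
`∫ g d(ESD(A N)) → ∫ g dμ` in probability. -/
def ESDTendstoInProb {Ω : Type*} [MeasurableSpace Ω] (P : Measure Ω)
    (A : (N : ℕ) → Ω → Matrix (Fin N) (Fin N) ℝ) (μ : Measure ℝ) : Prop :=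
  ∀ g : ℝ → ℝ, Continuous g → (∃ C, ∀ x, |g x| ≤ C) →
    ∀ ε > 0, Tendsto (fun N => P {ω | ε ≤ |esdEval (A N ω) g - ∫ x, g x ∂μ|})
      atTop (nhds 0)

/-- The symmetric matrix `W_N/√N`, where `W_N(i,j) = X_{i,j} + X_{j,i}`,
`1 ≤ i,j ≤ N`. -/
def scaledW {Ω : Type*} (X : ℤ → ℤ → Ω → ℝ) (N : ℕ) (ω : Ω) :
    Matrix (Fin N) (Fin N) ℝ :=
  fun i j => (Real.sqrt N)⁻¹ *
    (X ((i : ℕ) + 1) ((j : ℕ) + 1) ω + X ((j : ℕ) + 1) ((i : ℕ) + 1) ω)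

/-- A centered stationary Gaussian process indexed by `ℤ²` with positive
variance: every finite real linear combination is a centered Gaussian random
variable, and second moments are shift invariant. -/
structure StatGauss {Ω : Type*} [MeasurableSpace Ω] (P : Measure Ω)
    (X : ℤ → ℤ → Ω → ℝ) : Prop where
  meas : ∀ j k, Measurable (X j k)
  gauss : ∀ c : (ℤ × ℤ) →₀ ℝ, ∃ v : NNReal,
    P.map (fun ω => ∑ p ∈ c.support, c p * X p.1 p.2 ω) = gaussianReal 0 v
  var_pos : 0 < ∫ ω, (X 0 0 ω) ^ 2 ∂P
  stat : ∀ j k u v : ℤ,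
    ∫ ω, X j k ω * X (j + u) (k + v) ω ∂P = ∫ ω, X 0 0 ω * X u v ω ∂P

/-- The spectral measure `ν` of the process `X` (from the Herglotz
representation), together with the standing assumption of the paper:
`ν = ν_ac + ν_d`, where `ν_ac` is absolutely continuous with respect to
Lebesgue measure with density `f ≥ 0` and `ν_d = νd` is discrete (supported on
a countable set). -/
structure SpectralDecomp {Ω : Type*} [MeasurableSpace Ω] (P : Measure Ω)
    (X : ℤ → ℤ → Ω → ℝ) (ν νd : Measure (ℝ × ℝ)) (f : ℝ × ℝ → ℝ) : Prop where
  finite : IsFiniteMeasure ν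
  support : ν specBoxᶜ = 0
  herglotz : ∀ u v : ℤ,
    (∫ q, Complex.exp (Complex.I * ((u * q.1 + v * q.2 : ℝ) : ℂ)) ∂ν)
      = ((∫ ω, X 0 0 ω * X u v ω ∂P : ℝ) : ℂ)
  f_nonneg : ∀ q, 0 ≤ f q
  f_meas : Measurable f
  discrete : ∃ s : Set (ℝ × ℝ), s.Countable ∧ νd sᶜ = 0
  decomp : ν = (volume.restrict specBox).withDensity
      (fun q => ENNReal.ofReal (f q)) + νd


theorem xspec {N : ℕ} {A : Matrix (Fin N) (Fin N) ℝ} (hA : A.IsHermitian) :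
    ∃ U : Matrix (Fin N) (Fin N) ℝ, U.transpose * U = 1 ∧ U * U.transpose = 1 ∧
      A = U * Matrix.diagonal hA.eigenvalues * U.transpose := by
  refine ⟨hA.eigenvectorUnitary, ?_, ?_, ?_⟩
  · have := Unitary.coe_star_mul_self hA.eigenvectorUnitary
    rwa [Matrix.star_eq_conjTranspose, Matrix.conjTranspose_eq_transpose_of_trivial] at this
  · rw [mul_eq_one_comm]
    have := Unitary.coe_star_mul_self hA.eigenvectorUnitary
    rwa [Matrix.star_eq_conjTranspose, Matrix.conjTranspose_eq_transpose_of_trivial] at this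
  · have := hA.spectral_theorem
    rw [Unitary.conjStarAlgAut_apply] at this
    rw [Matrix.star_eq_conjTranspose, Matrix.conjTranspose_eq_transpose_of_trivial] at this
    exact this

theorem xpow {N : ℕ} {U : Matrix (Fin N) (Fin N) ℝ} (h : U.transpose * U = 1)
    (h' : U * U.transpose = 1) (d : Fin N → ℝ) (l : ℕ) :
    (U * Matrix.diagonal d * U.transpose) ^ l =
      U * Matrix.diagonal (fun i => d i ^ l) * U.transpose := by
  induction l with
  | zero => simp [h']
  | succ l ih =>
    rw [pow_succ, ih]
    calc _ = U * Matrix.diagonal (fun i => d i ^ l) * (U.transpose * U) * Matrix.diagonal d * U.transpose := by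
          simp only [Matrix.mul_assoc]
      _ = _ := by
          rw [h, Matrix.mul_one, Matrix.mul_assoc U, Matrix.diagonal_mul_diagonal]
          simp only [pow_succ]

theorem xyoung2 (x y : ℝ) (l l' q : ℕ) (h : l + l' = 2 * q) :
    x ^ l * y ^ l' ≤ x ^ (2 * q) + y ^ (2 * q) := by
  have h0 : x ^ l * y ^ l' ≤ |x| ^ l * |y| ^ l' := by
    rw [← abs_pow, ← abs_pow, ← abs_mul]; exact le_abs_self _
  have e : ∀ z : ℝ, z ^ (2*q) = |z| ^ (2*q) := fun z => by
    rw [pow_mul, pow_mul, sq_abs]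
  rw [e x, e y]
  rcases le_total |x| |y| with g | g
  · have : |x| ^ l * |y| ^ l' ≤ |y| ^ l * |y| ^ l' := by gcongr
    rw [← pow_add, h] at this
    have := pow_nonneg (abs_nonneg x) (2*q)
    linarith
  · have : |x| ^ l * |y| ^ l' ≤ |x| ^ l * |x| ^ l' := by gcongr
    rw [← pow_add, h] at this
    have := pow_nonneg (abs_nonneg y) (2*q)
    linarith

theorem xtr {N : ℕ} (U B : Matrix (Fin N) (Fin N) ℝ) (a b : Fin N → ℝ) :
    (B * (U * Matrix.diagonal a * U.transpose) * B * (U * Matrix.diagonal b * U.transpose)).trace =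
     ∑ i, ∑ j, (U.transpose * B * U) i j * a j * ((U.transpose * B * U) j i * b i) := by
  rw [← Matrix.mul_assoc, Matrix.trace_mul_comm]
  have : U.transpose * (B * (U * Matrix.diagonal a * U.transpose) * B * (U * Matrix.diagonal b)) =
    ((U.transpose * B * U) * Matrix.diagonal a) * ((U.transpose * B * U) * Matrix.diagonal b) := by
    simp only [Matrix.mul_assoc]
  rw [this]
  simp only [Matrix.trace, Matrix.diag, Matrix.mul_apply (M := _ * Matrix.diagonal a), Matrix.mul_diagonal]

theorem xT1 {N : ℕ} {A B : Matrix (Fin N) (Fin N) ℝ} (hA : A.IsHermitian) (hB : B.IsHermitian)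
    (l l' q : ℕ) (h : l + l' = 2 * q) :
    (B * A ^ l * B * A ^ l').trace ≤ 2 * (B * B * A ^ (2 * q)).trace := by
  obtain ⟨U, h1, h2, h3⟩ := xspec hA
  set d := hA.eigenvalues
  have hB' : B.transpose = B := by simpa [Matrix.IsHermitian] using hB
  have hC : (U.transpose * B * U).transpose = U.transpose * B * U := by
    simp [Matrix.transpose_mul, hB', Matrix.mul_assoc]
  have hC' : ∀ i j, (U.transpose * B * U) i j = (U.transpose * B * U) j i := fun i j => by
    conv_lhs => rw [← hC]
    rfl
  have e1 : B * B * A ^ (2*q) = B * (U * Matrix.diagonal (fun _ => 1) * U.transpose) * B *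
     (U * Matrix.diagonal (fun i => d i ^ (2*q)) * U.transpose) := by
    rw [h3, xpow h1 h2]; simp [h2]
  rw [e1, xtr, h3, xpow h1 h2, xpow h1 h2, xtr]
  generalize U.transpose * B * U = C at *
  have s1 : ∑ i, ∑ j, C i j * d j ^ l * (C j i * d i ^ l') ≤
      ∑ i, ∑ j, (C i j * 1 * (C j i * d i ^ (2*q)) + C j i * 1 * (C i j * d j ^ (2*q))) := by
    refine Finset.sum_le_sum fun i _ => Finset.sum_le_sum fun j _ => ?_
    have := xyoung2 (d j) (d i) l l' q h
    rw [hC' j i]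
    nlinarith [mul_le_mul_of_nonneg_left this (mul_self_nonneg (C i j))]
  refine s1.trans (le_of_eq ?_)
  simp only [Finset.sum_add_distrib]
  rw [Finset.sum_comm (f := fun i j => C j i * 1 * (C i j * d j ^ (2*q)))]
  ring

/-- coefficient words -/
def xS {N : ℕ} (A B : Matrix (Fin N) (Fin N) ℝ) : ℕ → ℕ → Matrix (Fin N) (Fin N) ℝ
  | 0, 0 => 1
  | 0, _ + 1 => 0
  | n + 1, 0 => A * xS A B n 0
  | n + 1, k + 1 => A * xS A B n (k + 1) + B * xS A B n k

theorem xS_zero {N : ℕ} (A B : Matrix (Fin N) (Fin N) ℝ) (n : ℕ) : xS A B n 0 = A ^ n := by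
  induction n with
  | zero => simp [xS]
  | succ n ih => rw [xS, ih, pow_succ']

theorem xS_big {N : ℕ} (A B : Matrix (Fin N) (Fin N) ℝ) (n k : ℕ) (h : n < k) : xS A B n k = 0 := by
  induction n generalizing k with
  | zero => obtain ⟨k, rfl⟩ := Nat.exists_eq_succ_of_ne_zero (by omega : k ≠ 0); simp [xS]
  | succ n ih =>
    obtain ⟨k, rfl⟩ := Nat.exists_eq_succ_of_ne_zero (by omega : k ≠ 0)
    simp [xS, ih (k+1) (by omega), ih k (by omega)]

theorem xS_sum {N : ℕ} (A B : Matrix (Fin N) (Fin N) ℝ) (s : ℝ) (n : ℕ) :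
    (A + s • B) ^ n = ∑ k ∈ Finset.range (n + 1), s ^ k • xS A B n k := by
  induction n with
  | zero => simp [xS]
  | succ n ih =>
    rw [pow_succ', ih, Finset.sum_range_succ' _ (n+1), add_mul]
    have : ∑ k ∈ Finset.range (n+1), s ^ (k+1) • xS A B (n+1) (k+1) =
       ∑ k ∈ Finset.range (n+1), s ^ (k+1) • (A * xS A B n (k+1)) +
       ∑ k ∈ Finset.range (n+1), s ^ (k+1) • (B * xS A B n k) := by
      rw [← Finset.sum_add_distrib]
      exact Finset.sum_congr rfl fun k _ => by rw [xS, smul_add]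
    rw [this]
    have h2 : A * ∑ k ∈ Finset.range (n + 1), s ^ k • xS A B n k =
       ∑ k ∈ Finset.range (n+1), s ^ (k+1) • (A * xS A B n (k+1)) + s ^ 0 • xS A B (n+1) 0 := by
      rw [Finset.sum_range_succ' _ n, Finset.sum_range_succ _ n, xS_big A B n (n+1) (by omega), xS,
        mul_add, Finset.mul_sum]
      simp
    have h3 : (s • B) * ∑ k ∈ Finset.range (n + 1), s ^ k • xS A B n k =
       ∑ k ∈ Finset.range (n+1), s ^ (k+1) • (B * xS A B n k) := by
      rw [Finset.mul_sum]
      exact Finset.sum_congr rfl fun k _ => by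
        rw [smul_mul_smul_comm, pow_succ' s k]
    rw [h2, h3]; abel

theorem xW1 {N : ℕ} {A B : Matrix (Fin N) (Fin N) ℝ} (hA : A.IsHermitian) (hB : B.IsHermitian)
    (q n : ℕ) : ∀ a c, n + a + c = 2 * q + 1 →
    (A ^ a * B * A ^ c * xS A B n 1).trace ≤ n * (2 * (B * B * A ^ (2 * q)).trace) := by
  induction n with
  | zero => intro a c _; simp [xS]
  | succ n ih =>
    intro a c h
    rw [xS, xS_zero, mul_add, Matrix.trace_add]
    have e1 := ih a (c+1) (by omega)
    have e2 := xT1 hA hB c (n + a) q (by omega)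
    have e3 : A ^ a * B * A ^ c * (A * xS A B n 1) = A ^ a * B * A ^ (c+1) * xS A B n 1 := by
      rw [pow_succ]; simp only [mul_assoc]
    have e4 : (A ^ a * B * A ^ c * (B * A ^ n)).trace = (B * A ^ c * B * A ^ (n + a)).trace := by
      rw [mul_assoc, mul_assoc, Matrix.trace_mul_comm, pow_add]
      simp only [mul_assoc]
    rw [zero_add, e3, e4]
    push_cast
    linarith

theorem xW2 {N : ℕ} {A B : Matrix (Fin N) (Fin N) ℝ} (hA : A.IsHermitian) (hB : B.IsHermitian)
    (q : ℕ) (hτ : 0 ≤ (B * B * A ^ (2 * q)).trace) (n : ℕ) : ∀ a, n + a = 2 * q + 2 →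
    (A ^ a * xS A B n 2).trace ≤ (n : ℝ) ^ 2 * (2 * (B * B * A ^ (2 * q)).trace) := by
  induction n with
  | zero => intro a _; simp [xS]
  | succ n ih =>
    intro a h
    rw [xS, mul_add, Matrix.trace_add]
    have e1 := ih (a+1) (by omega)
    have e2 := xW1 hA hB q n a 0 (by omega)
    have e3 : A ^ a * (A * xS A B n 2) = A ^ (a+1) * xS A B n 2 := by
      rw [pow_succ]; simp only [mul_assoc]
    have e4 : A ^ a * (B * xS A B n 1) = A ^ a * B * A ^ 0 * xS A B n 1 := by
      simp [mul_assoc]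
    rw [show 1 + 1 = 2 from rfl, e3, e4]
    push_cast
    have : (0:ℝ) ≤ n := by positivity
    nlinarith [mul_nonneg this hτ]

/-- trace of `B B A^{2q}` -/
theorem xtau {N : ℕ} {A B U : Matrix (Fin N) (Fin N) ℝ} {d : Fin N → ℝ} (hB : B.IsHermitian)
    (h1 : U.transpose * U = 1) (h2 : U * U.transpose = 1)
    (h3 : A = U * Matrix.diagonal d * U.transpose) (l : ℕ) :
    (B * B * A ^ l).trace = ∑ j, d j ^ l * ∑ i, (B.mulVec (fun k => U k j) i) ^ 2 := by
  have hB' : B.transpose = B := by simpa [Matrix.IsHermitian] using hB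
  have : B * B * A ^ l = B * ((B * U) * Matrix.diagonal (fun i => d i ^ l)) * U.transpose := by
    rw [h3, xpow h1 h2]; simp only [mul_assoc]
  rw [this, Matrix.trace_mul_comm]
  have : U.transpose * (B * ((B * U) * Matrix.diagonal (fun i => d i ^ l))) =
     ((B * U).transpose * (B * U)) * Matrix.diagonal (fun i => d i ^ l) := by
    rw [Matrix.transpose_mul, hB']; simp only [mul_assoc]
  rw [this]
  simp only [Matrix.trace, Matrix.diag, Matrix.mul_diagonal]
  refine Finset.sum_congr rfl fun j _ => ?_
  rw [mul_comm, Matrix.mul_apply]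
  congr 1
  refine Finset.sum_congr rfl fun i _ => ?_
  rw [Matrix.transpose_apply, ← sq]
  rfl

theorem xtau_nonneg {N : ℕ} {A B : Matrix (Fin N) (Fin N) ℝ} (hA : A.IsHermitian)
    (hB : B.IsHermitian) (q : ℕ) : 0 ≤ (B * B * A ^ (2 * q)).trace := by
  obtain ⟨U, h1, h2, h3⟩ := xspec hA
  rw [xtau hB h1 h2 h3]
  refine Finset.sum_nonneg fun j _ => mul_nonneg ?_ (Finset.sum_nonneg fun i _ => sq_nonneg _)
  rw [pow_mul]; positivity

theorem xS2 {N : ℕ} {A B : Matrix (Fin N) (Fin N) ℝ} (hA : A.IsHermitian) (hB : B.IsHermitian)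
    (q : ℕ) : (xS A B (2 * q + 2) 2).trace ≤
      8 * ((q : ℝ) + 1) ^ 2 * (B * B * A ^ (2 * q)).trace := by
  have := xW2 hA hB q (xtau_nonneg hA hB q) (2*q+2) 0 (by omega)
  rw [pow_zero, one_mul] at this
  refine this.trans (le_of_eq ?_)
  push_cast; ring

theorem xtrpow {N : ℕ} {A U : Matrix (Fin N) (Fin N) ℝ} {d : Fin N → ℝ}
    (h1 : U.transpose * U = 1) (h2 : U * U.transpose = 1)
    (h3 : A = U * Matrix.diagonal d * U.transpose) (l : ℕ) :
    (A ^ l).trace = ∑ j, d j ^ l := by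
  rw [h3, xpow h1 h2, mul_assoc, Matrix.trace_mul_comm, mul_assoc, h1]
  simp [Matrix.trace]


/-- squared Frobenius norm -/
def xfrob {N : ℕ} (B : Matrix (Fin N) (Fin N) ℝ) : ℝ := ∑ i, ∑ j, B i j ^ 2

theorem xfrob_eq {N : ℕ} (B : Matrix (Fin N) (Fin N) ℝ) : xfrob B = (B * B.transpose).trace := by
  simp [xfrob, Matrix.trace, Matrix.mul_apply, sq]

theorem xfrob_mulU {N : ℕ} (B U : Matrix (Fin N) (Fin N) ℝ) (h : U * U.transpose = 1) :
    xfrob (B * U) = xfrob B := by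
  rw [xfrob_eq, xfrob_eq, Matrix.transpose_mul, mul_assoc, ← mul_assoc U, h, one_mul]

theorem xfrob_mulG {N : ℕ} (W G : Matrix (Fin N) (Fin N) ℝ) (hG : G.transpose = G)
    (hc : ∀ v : Fin N → ℝ, ∑ i, (G.mulVec v i) ^ 2 ≤ ∑ i, v i ^ 2) :
    xfrob (W * G) ≤ xfrob W := by
  refine Finset.sum_le_sum fun i _ => ?_
  refine le_trans (le_of_eq ?_) (hc (fun k => W i k))
  refine Finset.sum_congr rfl fun j _ => ?_
  congr 1
  rw [Matrix.mul_apply]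
  refine Finset.sum_congr rfl fun k _ => ?_
  rw [mul_comm]
  congr 1
  conv_lhs => rw [← hG]
  rfl

theorem xh (a b K : ℝ) (hK : 0 ≤ K) (m : ℕ) (hm : 1 ≤ m) :
    min ((a + b) ^ (2 * m)) K ≤ 4 ^ m * (a ^ (2 * m) + max 1 K * |b|) := by
  have h4 : (1:ℝ) ≤ 4 ^ m := one_le_pow₀ (by norm_num)
  have ha : 0 ≤ a ^ (2*m) := by rw [pow_mul]; positivity
  have hM : 1 ≤ max 1 K := le_max_left _ _
  have hM' : K ≤ max 1 K := le_max_right _ _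
  rcases le_total |b| 1 with h | h
  · refine (min_le_left _ _).trans ?_
    have h1 : (a + b) ^ (2*m) ≤ 4 ^ m * (a ^ (2*m) + b ^ (2*m)) := by
      have hx : (a + b) ^ 2 ≤ 4 * max (a^2) (b^2) := by
        rcases le_total (a^2) (b^2) with g | g
        · rw [max_eq_right g]; nlinarith [sq_nonneg (a-b)]
        · rw [max_eq_left g]; nlinarith [sq_nonneg (a-b)]
      calc (a+b)^(2*m) = ((a+b)^2)^m := pow_mul _ _ _
        _ ≤ (4 * max (a^2) (b^2)) ^ m := pow_le_pow_left₀ (sq_nonneg _) hx m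
        _ = 4 ^ m * (max (a^2) (b^2)) ^ m := mul_pow _ _ _
        _ ≤ _ := by
          rw [pow_mul a, pow_mul b]
          have e1 : 0 ≤ (a^2)^m := by positivity
          have e2 : 0 ≤ (b^2)^m := by positivity
          refine mul_le_mul_of_nonneg_left ?_ (by positivity)
          rcases le_total (a^2) (b^2) with g | g
          · rw [max_eq_right g]; linarith
          · rw [max_eq_left g]; linarith
    have h2 : b ^ (2*m) ≤ |b| := by
      have : b ^ (2*m) = |b| ^ (2*m) := by rw [pow_mul, pow_mul, sq_abs]
      rw [this]
      exact pow_le_of_le_one (abs_nonneg _) h (by omega)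
    refine h1.trans (mul_le_mul_of_nonneg_left ?_ (by positivity))
    nlinarith [abs_nonneg b]
  · refine (min_le_right _ _).trans ?_
    have : K ≤ max 1 K * |b| := by nlinarith
    nlinarith

theorem xjensen {N : ℕ} {A U : Matrix (Fin N) (Fin N) ℝ} (hA : A.IsHermitian)
    (h1 : U.transpose * U = 1) (h2 : U * U.transpose = 1) (m : ℕ) :
    ∑ j, ((U.transpose * A * U) j j) ^ (2 * m) ≤ (A ^ (2 * m)).trace := by
  obtain ⟨V, g1, g2, g3⟩ := xspec hA
  set d := hA.eigenvalues
  rw [xtrpow g1 g2 g3]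
  have o1 : (V.transpose * U).transpose * (V.transpose * U) = 1 := by
    rw [Matrix.transpose_mul, Matrix.transpose_transpose, mul_assoc, ← mul_assoc V, g2, one_mul, h1]
  have o2 : (V.transpose * U) * (V.transpose * U).transpose = 1 := by
    rw [mul_eq_one_comm]; exact o1
  have e : U.transpose * A * U = (V.transpose * U).transpose * Matrix.diagonal d * (V.transpose * U) := by
    conv_lhs => rw [g3]
    rw [Matrix.transpose_mul, Matrix.transpose_transpose]; simp only [mul_assoc]
  rw [e]
  generalize V.transpose * U = O at *
  have c1 : ∀ j, ∑ i, O i j ^ 2 = 1 := fun j => by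
    have := congrFun (congrFun o1 j) j
    rw [Matrix.mul_apply, Matrix.one_apply_eq] at this
    rw [← this]; exact Finset.sum_congr rfl fun i _ => by rw [sq]; rfl
  have c2 : ∀ i, ∑ j, O i j ^ 2 = 1 := fun i => by
    have := congrFun (congrFun o2 i) i
    rw [Matrix.mul_apply, Matrix.one_apply_eq] at this
    rw [← this]; exact Finset.sum_congr rfl fun i _ => by rw [sq]; rfl
  calc ∑ j, ((O.transpose * Matrix.diagonal d * O) j j) ^ (2*m)
      = ∑ j, (∑ i, O i j ^ 2 * d i) ^ (2*m) := by
        refine Finset.sum_congr rfl fun j _ => ?_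
        congr 1
        rw [Matrix.mul_apply]
        refine Finset.sum_congr rfl fun i _ => ?_
        rw [Matrix.mul_diagonal, Matrix.transpose_apply]; ring
    _ ≤ ∑ j, ∑ i, O i j ^ 2 * d i ^ (2*m) := by
        refine Finset.sum_le_sum fun j _ => ?_
        exact Real.pow_arith_mean_le_arith_mean_pow_of_even _ _ _ (fun i _ => sq_nonneg _) (c1 j)
          (even_two_mul m)
    _ = ∑ i, d i ^ (2*m) := by
        rw [Finset.sum_comm]
        refine Finset.sum_congr rfl fun i _ => ?_
        rw [← Finset.sum_mul, c2, one_mul]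

theorem xdot {N : ℕ} (C D : Matrix (Fin N) (Fin N) ℝ) (η : ℝ) (hη : 0 < η) :
    ∑ j, |(C.transpose * D) j j| ≤ (η * xfrob C + η⁻¹ * xfrob D) / 2 := by
  have : ∀ j, |(C.transpose * D) j j| ≤ ∑ k, (η * C k j ^ 2 + η⁻¹ * D k j ^ 2) / 2 := fun j => by
    rw [Matrix.mul_apply]
    refine (Finset.abs_sum_le_sum_abs _ _).trans (Finset.sum_le_sum fun k _ => ?_)
    rw [Matrix.transpose_apply, abs_mul, ← sq_abs (C k j), ← sq_abs (D k j)]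
    have : 0 ≤ η⁻¹ * (η * |C k j| - |D k j|) ^ 2 := by positivity
    have e : η⁻¹ * (η * |C k j| - |D k j|) ^ 2 = η * |C k j|^2 + η⁻¹ * |D k j|^2 - 2 * (|C k j| * |D k j|) := by
      field_simp; ring
    linarith
  refine (Finset.sum_le_sum fun j _ => this j).trans (le_of_eq ?_)
  rw [xfrob, xfrob, Finset.sum_comm]
  simp only [← Finset.sum_div, Finset.sum_add_distrib, Finset.mul_sum]

theorem xcmp {N : ℕ} {W G : Matrix (Fin N) (Fin N) ℝ} (hW : W.IsHermitian) (hG : G.transpose = G)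
    (hc : ∀ v : Fin N → ℝ, ∑ i, (G.mulVec v i) ^ 2 ≤ ∑ i, v i ^ 2)
    (K η : ℝ) (hK : 0 ≤ K) (hη : 0 < η) (m : ℕ) (hm : 1 ≤ m) :
    ∑ j, min (hW.eigenvalues j ^ (2 * m)) K ≤ 4 ^ m * (((G * W * G) ^ (2 * m)).trace +
      max 1 K * (η * xfrob W + η⁻¹ * xfrob (1 - G))) := by
  obtain ⟨U, h1, h2, h3⟩ := xspec hW
  set d := hW.eigenvalues
  have hW' : W.transpose = W := by simpa [Matrix.IsHermitian] using hW
  have hA : (G * W * G).IsHermitian := by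
    simp [Matrix.IsHermitian, hG, hW', Matrix.mul_assoc]
  have hd : ∀ j, d j = (U.transpose * (G * W * G) * U) j j +
     (((U.transpose * (1 - G) * W * U) j j) + (U.transpose * G * W * (1 - G) * U) j j) := fun j => by
    have e : U.transpose * (G * W * G) * U + (U.transpose * (1 - G) * W * U + U.transpose * G * W * (1 - G) * U) = U.transpose * W * U := by
      noncomm_ring
    have e2 : U.transpose * W * U = Matrix.diagonal d := by
      conv_lhs => rw [h3]
      calc _ = (U.transpose * U) * Matrix.diagonal d * (U.transpose * U) := by simp only [mul_assoc]
        _ = _ := by rw [h1]; simp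
    have := congrFun (congrFun (e.trans e2) j) j
    rw [Matrix.diagonal_apply_eq] at this
    rw [← this]; rfl
  have s1 := xjensen hA h1 h2 m
  have s2 := xdot (W * U) ((1 - G) * U) η hη
  have s3 := xdot (W * G * U) ((1 - G) * U) η hη
  rw [xfrob_mulU _ _ h2, xfrob_mulU _ _ h2] at s2 s3
  have s4 := xfrob_mulG W G hG hc
  have t2 : ∀ j, (U.transpose * (1 - G) * W * U) j j = ((W * U).transpose * ((1-G) * U)) j j := fun j => by
    have : (U.transpose * (1 - G) * W * U).transpose = (W * U).transpose * ((1-G) * U) := by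
      simp only [Matrix.transpose_mul, Matrix.transpose_sub, Matrix.transpose_transpose, hG, mul_assoc, Matrix.transpose_one]
    rw [← this]; rfl
  have t3 : ∀ j, (U.transpose * G * W * (1 - G) * U) j j = ((W * G * U).transpose * ((1-G) * U)) j j := fun j => by
    simp only [Matrix.transpose_mul, hG, hW', mul_assoc]
  calc ∑ j, min (d j ^ (2 * m)) K ≤ ∑ j, 4 ^ m * (((U.transpose * (G * W * G) * U) j j) ^ (2*m) +
        max 1 K * |(((U.transpose * (1 - G) * W * U) j j) + (U.transpose * G * W * (1 - G) * U) j j)|) := by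
        refine Finset.sum_le_sum fun j _ => ?_
        rw [hd j]; exact xh _ _ K hK m hm
    _ ≤ ∑ j, 4 ^ m * (((U.transpose * (G * W * G) * U) j j) ^ (2*m) +
        max 1 K * (|((W * U).transpose * ((1-G) * U)) j j| + |((W * G * U).transpose * ((1-G) * U)) j j|)) := by
        refine Finset.sum_le_sum fun j _ => ?_
        rw [← t2, ← t3]
        gcongr
        exact abs_add_le _ _
    _ = 4 ^ m * (∑ j, ((U.transpose * (G * W * G) * U) j j) ^ (2*m) + max 1 K *
         (∑ j, |((W * U).transpose * ((1-G) * U)) j j| + ∑ j, |((W * G * U).transpose * ((1-G) * U)) j j|)) := by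
        simp only [← Finset.mul_sum, Finset.sum_add_distrib]
    _ ≤ _ := by
        have e : ∑ j, |((W * U).transpose * ((1-G) * U)) j j| + ∑ j, |((W * G * U).transpose * ((1-G) * U)) j j|
            ≤ η * xfrob W + η⁻¹ * xfrob (1 - G) := by nlinarith
        have e2 : 0 ≤ max 1 K := le_trans zero_le_one (le_max_left _ _)
        exact mul_le_mul_of_nonneg_left (add_le_add s1 (mul_le_mul_of_nonneg_left e e2)) (by positivity)


def xc {N : ℕ} (x : ℝ) : Fin N → ℝ := fun k => cos (((k : ℕ) : ℝ) * x)
def xs {N : ℕ} (x : ℝ) : Fin N → ℝ := fun k => sin (((k : ℕ) : ℝ) * x)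
def xt {N : ℕ} (v : Fin N → ℝ) (x : ℝ) : ℝ := (∑ k, v k * xc x k) ^ 2 + (∑ k, v k * xs x k) ^ 2
def xq {N : ℕ} (v : Fin N → ℝ) (p : ℝ × ℝ) : ℝ := xt v p.1 + xt v p.2

theorem xcs {N : ℕ} (k l : Fin N) (x : ℝ) :
    cos ((((k : ℕ) : ℝ) - ((l : ℕ) : ℝ)) * x) = xc x k * xc x l + xs x k * xs x l := by
  rw [sub_mul, cos_sub]; rfl

theorem xt_eq {N : ℕ} (v : Fin N → ℝ) (x : ℝ) :
    xt v x = ∑ k, ∑ l, v k * v l * cos ((((k : ℕ) : ℝ) - ((l : ℕ) : ℝ)) * x) := by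
  rw [xt, sq, sq, Finset.sum_mul_sum, Finset.sum_mul_sum, ← Finset.sum_add_distrib]
  refine Finset.sum_congr rfl fun k _ => ?_
  rw [← Finset.sum_add_distrib]
  refine Finset.sum_congr rfl fun l _ => ?_
  rw [xcs]; ring

theorem xt_nonneg {N : ℕ} (v : Fin N → ℝ) (x : ℝ) : 0 ≤ xt v x := by unfold xt; positivity
theorem xq_nonneg {N : ℕ} (v : Fin N → ℝ) (p : ℝ × ℝ) : 0 ≤ xq v p :=
  add_nonneg (xt_nonneg _ _) (xt_nonneg _ _)

theorem xq_eq {N : ℕ} (v : Fin N → ℝ) (p : ℝ × ℝ) :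
    xq v p = ∑ k, ∑ l, v k * v l * (cos ((((k : ℕ) : ℝ) - ((l : ℕ) : ℝ)) * p.1) +
      cos ((((k : ℕ) : ℝ) - ((l : ℕ) : ℝ)) * p.2)) := by
  rw [xq, xt_eq, xt_eq, ← Finset.sum_add_distrib]
  refine Finset.sum_congr rfl fun k _ => ?_
  rw [← Finset.sum_add_distrib]
  refine Finset.sum_congr rfl fun l _ => ?_
  ring

theorem xcos_int (ν : Measure (ℝ × ℝ)) [IsFiniteMeasure ν] (a b : ℝ) :
    Integrable (fun p : ℝ × ℝ => cos (a * p.1 + b * p.2)) ν := by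
  refine Integrable.of_bound (C := 1) (by fun_prop) (Eventually.of_forall fun p => ?_)
  simpa using abs_cos_le_one _

theorem xker_int (ν : Measure (ℝ × ℝ)) [IsFiniteMeasure ν] (a : ℝ) :
    Integrable (fun p : ℝ × ℝ => cos (a * p.1) + cos (a * p.2)) ν := by
  have h1 := xcos_int ν a 0
  have h2 := xcos_int ν 0 a
  simp only [zero_mul, add_zero, zero_add] at h1 h2
  exact h1.add h2

theorem xq_int {N : ℕ} (ν : Measure (ℝ × ℝ)) [IsFiniteMeasure ν] (v : Fin N → ℝ) :
    Integrable (xq v) ν := by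
  have : xq v = fun p => ∑ k, ∑ l, v k * v l * (cos ((((k : ℕ) : ℝ) - ((l : ℕ) : ℝ)) * p.1) +
      cos ((((k : ℕ) : ℝ) - ((l : ℕ) : ℝ)) * p.2)) := funext (xq_eq v)
  rw [this]
  exact integrable_finsetSum _ fun k _ => integrable_finsetSum _ fun l _ =>
    (xker_int ν _).const_mul _

def xD (ν : Measure (ℝ × ℝ)) (N : ℕ) : Matrix (Fin N) (Fin N) ℝ := fun k l =>
  ∫ p, (cos ((((k : ℕ) : ℝ) - ((l : ℕ) : ℝ)) * p.1) + cos ((((k : ℕ) : ℝ) - ((l : ℕ) : ℝ)) * p.2)) ∂ν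

theorem xD_int {N : ℕ} (ν : Measure (ℝ × ℝ)) [IsFiniteMeasure ν] (B : Fin N → Fin N → ℝ) :
    ∑ k, ∑ l, B k l * xD ν N k l = ∫ p, ∑ k, ∑ l, B k l * (cos ((((k : ℕ) : ℝ) - ((l : ℕ) : ℝ)) * p.1) +
      cos ((((k : ℕ) : ℝ) - ((l : ℕ) : ℝ)) * p.2)) ∂ν := by
  rw [integral_finsetSum _ fun k _ => integrable_finsetSum _ fun l _ => (xker_int ν _).const_mul _]
  refine Finset.sum_congr rfl fun k _ => ?_
  rw [integral_finsetSum _ fun l _ => (xker_int ν _).const_mul _]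
  refine Finset.sum_congr rfl fun l _ => ?_
  rw [integral_const_mul]; rfl

theorem xq_D {N : ℕ} (ν : Measure (ℝ × ℝ)) [IsFiniteMeasure ν] (v : Fin N → ℝ) :
    ∫ p, xq v p ∂ν = ∑ k, ∑ l, v k * v l * xD ν N k l := by
  rw [xD_int ν (fun k l => v k * v l)]
  exact integral_congr_ae (Eventually.of_forall fun p => xq_eq v p)

theorem xquad {N : ℕ} (B : Matrix (Fin N) (Fin N) ℝ) (v : Fin N → ℝ) :
    ∑ k, ∑ l, v k * v l * B k l = v ⬝ᵥ B.mulVec v := by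
  simp only [dotProduct, Matrix.mulVec, Finset.mul_sum]
  exact Finset.sum_congr rfl fun k _ => Finset.sum_congr rfl fun l _ => by ring

theorem xquadU {N : ℕ} (U : Matrix (Fin N) (Fin N) ℝ) (a v : Fin N → ℝ) :
    v ⬝ᵥ (U * Matrix.diagonal a * U.transpose).mulVec v = ∑ j, a j * (U.transpose.mulVec v j) ^ 2 := by
  rw [← Matrix.mulVec_mulVec, ← Matrix.mulVec_mulVec, Matrix.dotProduct_mulVec,
    ← Matrix.mulVec_transpose]
  simp only [dotProduct, Matrix.mulVec_diagonal]
  exact Finset.sum_congr rfl fun j _ => by ring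

theorem xnormU {N : ℕ} {U : Matrix (Fin N) (Fin N) ℝ} (h : U * U.transpose = 1) (v : Fin N → ℝ) :
    ∑ j, (U.transpose.mulVec v j) ^ 2 = ∑ j, v j ^ 2 := by
  have := xquadU U (fun _ => 1) v
  simp only [one_mul, Matrix.diagonal_one, mul_one, h, Matrix.one_mulVec] at this
  rw [← this]; simp [dotProduct, sq]

/-- kernel -/
def xphi {N : ℕ} (G : Matrix (Fin N) (Fin N) ℝ) (p : ℝ × ℝ) : ℝ :=
  xc p.1 ⬝ᵥ G.mulVec (xc p.1) + xs p.1 ⬝ᵥ G.mulVec (xs p.1) +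
  (xc p.2 ⬝ᵥ G.mulVec (xc p.2) + xs p.2 ⬝ᵥ G.mulVec (xs p.2))

theorem xphi_eq {N : ℕ} (G : Matrix (Fin N) (Fin N) ℝ) (p : ℝ × ℝ) :
    xphi G p = ∑ k, ∑ l, G k l * (cos ((((k : ℕ) : ℝ) - ((l : ℕ) : ℝ)) * p.1) +
      cos ((((k : ℕ) : ℝ) - ((l : ℕ) : ℝ)) * p.2)) := by
  simp only [xphi, ← xquad, ← Finset.sum_add_distrib]
  refine Finset.sum_congr rfl fun k _ => Finset.sum_congr rfl fun l _ => ?_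
  rw [xcs, xcs]; ring

theorem xcs_norm {N : ℕ} (x : ℝ) : ∑ k : Fin N, xc x k ^ 2 + ∑ k : Fin N, xs x k ^ 2 = N := by
  rw [← Finset.sum_add_distrib]
  simp [xc, xs]

theorem xG (ν : Measure (ℝ × ℝ)) [IsFiniteMeasure ν] (N : ℕ) :
    ∃ G : Matrix (Fin N) (Fin N) ℝ, G.transpose = G ∧
      (∀ v : Fin N → ℝ, ∑ i, (G.mulVec v i) ^ 2 ≤ ∑ i, v i ^ 2) ∧
      (∀ v : Fin N → ℝ, ∫ p, xq (G.mulVec v) p ∂ν ≤ ∑ i, v i ^ 2) ∧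
      (xfrob (1 - G) ≤ ∫ p, xphi G p ∂ν) ∧ (∀ p, 0 ≤ xphi G p) ∧ (∀ p, xphi G p ≤ 2 * N) ∧
      (∀ p, xphi G p * ν.real {p} ≤ 4) := by
  have hsym : (xD ν N).IsHermitian := by
    ext k l
    simp only [Matrix.conjTranspose_apply, star_trivial, xD]
    congr 1; ext p
    rw [← cos_neg, ← neg_mul, neg_sub, ← cos_neg ((((l : ℕ) : ℝ) - ((k : ℕ) : ℝ)) * p.2), ← neg_mul, neg_sub]
  obtain ⟨U, h1, h2, h3⟩ := xspec hsym
  set d := hsym.eigenvalues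
  have hQ : ∀ v : Fin N → ℝ, ∫ p, xq v p ∂ν = v ⬝ᵥ (xD ν N).mulVec v := fun v => by
    rw [xq_D, xquad]
  have hd : ∀ j, 0 ≤ d j := by
    intro j
    have := hQ (fun k => U k j)
    rw [h3, xquadU] at this
    have e : U.transpose.mulVec (fun k => U k j) = fun i => if i = j then 1 else 0 := by
      ext i
      have := congrFun (congrFun h1 i) j
      rw [Matrix.one_apply] at this
      rw [← this]; rfl
    rw [e] at this
    simp only [ite_pow, one_pow, ne_eq, OfNat.ofNat_ne_zero, not_false_eq_true, zero_pow, mul_ite, mul_one, mul_zero, Finset.sum_ite_eq', Finset.mem_univ, if_true] at this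
    rw [← this]
    exact integral_nonneg fun p => xq_nonneg _ p
  set g : Fin N → ℝ := fun j => (1 + d j)⁻¹ with hg
  have hg0 : ∀ j, 0 ≤ g j := fun j => by have := hd j; positivity
  have hg1 : ∀ j, g j * (1 + d j) = 1 := fun j => inv_mul_cancel₀ (by have := hd j; positivity)
  have hgle : ∀ j, g j ≤ 1 := fun j => by nlinarith [hg0 j, hg1 j, hd j, mul_nonneg (hg0 j) (hd j)]
  set G := U * Matrix.diagonal g * U.transpose with hG
  have hGt : G.transpose = G := by
    simp [hG, Matrix.transpose_mul, mul_assoc]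
  have hprod : ∀ a b : Fin N → ℝ, (U * Matrix.diagonal a * U.transpose) * (U * Matrix.diagonal b * U.transpose)
      = U * Matrix.diagonal (fun i => a i * b i) * U.transpose := fun a b => by
    calc _ = U * Matrix.diagonal a * (U.transpose * U) * Matrix.diagonal b * U.transpose := by
          simp only [mul_assoc]
      _ = _ := by rw [h1, mul_one, mul_assoc U, Matrix.diagonal_mul_diagonal]
  have hdotG : ∀ v w : Fin N → ℝ, G.mulVec v ⬝ᵥ w = v ⬝ᵥ G.mulVec w := fun v w => by
    rw [Matrix.dotProduct_mulVec, ← Matrix.mulVec_transpose, hGt]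
  have hGG : ∀ v : Fin N → ℝ, ∑ i, (G.mulVec v i) ^ 2 = ∑ j, g j * g j * (U.transpose.mulVec v j) ^ 2 := fun v => by
    rw [← xquadU, ← hprod, ← hG, ← Matrix.mulVec_mulVec v G G, ← hdotG]
    simp [dotProduct, sq]
  have hGDG : ∀ v : Fin N → ℝ, ∫ p, xq (G.mulVec v) p ∂ν = ∑ j, g j * d j * g j * (U.transpose.mulVec v j) ^ 2 := fun v => by
    rw [← xquadU, ← hprod, ← hprod, ← hG, ← h3, hQ, hdotG]
    simp only [← Matrix.mulVec_mulVec]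
  have hle : ∀ w : Fin N → ℝ, w ⬝ᵥ G.mulVec w ≤ ∑ i, w i ^ 2 := fun w => by
    rw [← xnormU h2 w, hG, xquadU]
    exact Finset.sum_le_sum fun j _ => by nlinarith [hgle j, sq_nonneg (U.transpose.mulVec w j)]
  have hnn : ∀ w : Fin N → ℝ, 0 ≤ w ⬝ᵥ G.mulVec w := fun w => by
    rw [hG, xquadU]
    exact Finset.sum_nonneg fun j _ => mul_nonneg (hg0 j) (sq_nonneg _)
  have hat : ∀ (p : ℝ × ℝ) (w : Fin N → ℝ), (∀ z : Fin N → ℝ, (z ⬝ᵥ w) ^ 2 ≤ xq z p) →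
      w ⬝ᵥ G.mulVec w * ν.real {p} ≤ 1 := by
    intro p w hw
    have e1 : w ⬝ᵥ G.mulVec w = ∑ i, (G.mulVec w i) ^ 2 + ∫ p, xq (G.mulVec w) p ∂ν := by
      rw [hGG, hGDG, ← Finset.sum_add_distrib, hG, xquadU]
      refine Finset.sum_congr rfl fun j _ => ?_
      linear_combination (- g j * (U.transpose.mulVec w j) ^ 2) * hg1 j
    have e2 : ν.real {p} * xq (G.mulVec w) p ≤ ∫ p, xq (G.mulVec w) p ∂ν := by
      have := setIntegral_le_integral (s := {p}) (xq_int ν (G.mulVec w)) (Eventually.of_forall fun p => xq_nonneg _ p)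
      rwa [integral_singleton, smul_eq_mul] at this
    have e3 := hw (G.mulVec w)
    rw [hdotG] at e3
    have e4 : 0 ≤ ∑ i, (G.mulVec w i) ^ 2 := Finset.sum_nonneg fun i _ => sq_nonneg _
    have e5 : 0 ≤ ν.real {p} := measureReal_nonneg
    have e6 := hnn w
    set t := w ⬝ᵥ G.mulVec w
    have e7 : ν.real {p} * t ^ 2 ≤ t := by nlinarith [mul_le_mul_of_nonneg_left e3 e5]
    rcases e6.eq_or_lt with h | h
    · rw [← h]; simp
    · by_contra hcon
      push Not at hcon
      nlinarith
  refine ⟨G, hGt, fun v => ?_, fun v => ?_, ?_, fun p => ?_, fun p => ?_, fun p => ?_⟩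
  · rw [hGG, ← xnormU h2 v]
    exact Finset.sum_le_sum fun j _ => by
      have : g j * g j ≤ 1 := by nlinarith [hg0 j, hgle j]
      nlinarith [sq_nonneg (U.transpose.mulVec v j)]
  · rw [hGDG, ← xnormU h2 v]
    exact Finset.sum_le_sum fun j _ => by
      have : g j * d j * g j ≤ 1 := by
        have a1 : g j * d j ≤ 1 := by nlinarith [hg0 j, hg1 j]
        nlinarith [hg0 j, hgle j, mul_nonneg (hg0 j) (hd j)]
      nlinarith [sq_nonneg (U.transpose.mulVec v j)]
  · have e1 : 1 - G = U * Matrix.diagonal (fun j => 1 - g j) * U.transpose := by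
      have : Matrix.diagonal (fun j => 1 - g j) = 1 - Matrix.diagonal g := by
        rw [← Matrix.diagonal_one, Matrix.diagonal_sub]
      rw [this, mul_sub, sub_mul, mul_one, h2]
    have e2 : (1 - G).transpose = 1 - G := by rw [Matrix.transpose_sub, hGt, Matrix.transpose_one]
    have htr : ∀ a : Fin N → ℝ, (U * Matrix.diagonal a * U.transpose).trace = ∑ j, a j := fun a => by
      have := xtrpow h1 h2 (rfl : U * Matrix.diagonal a * U.transpose = _) 1
      simpa using this
    have e3 : ∫ p, xphi G p ∂ν = ∑ j, g j * d j := by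
      rw [← htr, ← hprod, ← hG, ← h3]
      simp only [xphi_eq]
      refine (xD_int ν (fun k l => G k l)).symm.trans ?_
      rw [Matrix.trace]
      refine Finset.sum_congr rfl fun k _ => ?_
      rw [Matrix.diag_apply, Matrix.mul_apply]
      refine Finset.sum_congr rfl fun l _ => ?_
      congr 1
      have : (xD ν N).transpose = xD ν N := by simpa [Matrix.IsHermitian] using hsym
      conv_lhs => rw [← this]
      rfl
    rw [e3, xfrob_eq, e2, e1, hprod, htr]
    exact Finset.sum_le_sum fun j _ => by nlinarith [hg0 j, hg1 j, hgle j]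
  · exact add_nonneg (add_nonneg (hnn _) (hnn _)) (add_nonneg (hnn _) (hnn _))
  · have a1 := hle (xc p.1)
    have a2 := hle (xs p.1)
    have a3 := hle (xc p.2)
    have a4 := hle (xs p.2)
    have b1 := xcs_norm (N := N) p.1
    have b2 := xcs_norm (N := N) p.2
    unfold xphi
    linarith
  · have a1 := hat p (xc p.1) fun z => by
      simp only [xq, xt, dotProduct]; nlinarith [sq_nonneg (∑ k, z k * xs p.1 k), sq_nonneg (∑ k, z k * xc p.2 k), sq_nonneg (∑ k, z k * xs p.2 k)]
    have a2 := hat p (xs p.1) fun z => by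
      simp only [xq, xt, dotProduct]; nlinarith [sq_nonneg (∑ k, z k * xc p.1 k), sq_nonneg (∑ k, z k * xc p.2 k), sq_nonneg (∑ k, z k * xs p.2 k)]
    have a3 := hat p (xc p.2) fun z => by
      simp only [xq, xt, dotProduct]; nlinarith [sq_nonneg (∑ k, z k * xs p.1 k), sq_nonneg (∑ k, z k * xc p.1 k), sq_nonneg (∑ k, z k * xs p.2 k)]
    have a4 := hat p (xs p.2) fun z => by
      simp only [xq, xt, dotProduct]; nlinarith [sq_nonneg (∑ k, z k * xs p.1 k), sq_nonneg (∑ k, z k * xc p.2 k), sq_nonneg (∑ k, z k * xc p.1 k)]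
    unfold xphi
    linarith

theorem xphi_cont {N : ℕ} (G : Matrix (Fin N) (Fin N) ℝ) : Continuous (xphi G) := by
  have : xphi G = fun p => ∑ k, ∑ l, G k l * (cos ((((k : ℕ) : ℝ) - ((l : ℕ) : ℝ)) * p.1) +
      cos ((((k : ℕ) : ℝ) - ((l : ℕ) : ℝ)) * p.2)) := funext (xphi_eq G)
  rw [this]; fun_prop

theorem xGlim (ν : Measure (ℝ × ℝ)) [IsFiniteMeasure ν] (hs : ∃ s : Set (ℝ × ℝ), s.Countable ∧ ν sᶜ = 0) :
    ∃ G : (N : ℕ) → Matrix (Fin N) (Fin N) ℝ, (∀ N, (G N).transpose = G N) ∧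
      (∀ N, ∀ v : Fin N → ℝ, ∑ i, ((G N).mulVec v i) ^ 2 ≤ ∑ i, v i ^ 2) ∧
      (∀ N, ∀ v : Fin N → ℝ, ∫ p, xq ((G N).mulVec v) p ∂ν ≤ ∑ i, v i ^ 2) ∧
      ∀ ε > 0, ∀ᶠ N : ℕ in atTop, xfrob (1 - G N) ≤ ε * N := by
  choose G g1 g2 g3 g4 g5 g6 g7 using fun N => xG ν N
  refine ⟨G, g1, g2, g3, ?_⟩
  have hpos : ∀ᵐ p ∂ν, 0 < ν.real {p} := by
    obtain ⟨s, hs, h0⟩ := hs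
    have : {p | ¬ 0 < ν.real {p}} ⊆ sᶜ ∪ ⋃ p ∈ {p ∈ s | ν.real {p} = 0}, {p} := by
      intro p hp
      by_cases h : p ∈ s
      · right
        simp only [Set.mem_iUnion, Set.mem_singleton_iff]
        exact ⟨p, ⟨h, le_antisymm (not_lt.mp hp) measureReal_nonneg⟩, rfl⟩
      · left; exact h
    refine measure_mono_null this (measure_union_null h0 ?_)
    rw [measure_biUnion_null_iff (hs.mono fun p hp => hp.1)]
    intro p hp
    exact (measureReal_eq_zero_iff).mp hp.2
  have hlim : Tendsto (fun N : ℕ => ∫ p, xphi (G N) p / N ∂ν) atTop (nhds (∫ _, (0:ℝ) ∂ν)) := by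
    refine tendsto_integral_of_dominated_convergence (fun _ => 2) (fun N => ?_) (integrable_const _) (fun N => ?_) ?_
    · exact ((xphi_cont (G N)).div_const _).aestronglyMeasurable
    · refine Eventually.of_forall fun p => ?_
      rw [Real.norm_eq_abs, abs_of_nonneg (div_nonneg (g5 N p) (by positivity))]
      exact div_le_of_le_mul₀ (by positivity) (by norm_num) (g6 N p)
    · filter_upwards [hpos] with p hp
      refine squeeze_zero (g := fun N : ℕ => (4 / ν.real {p}) / N) (fun N => div_nonneg (g5 N p) (by positivity)) (fun N => ?_)
        (tendsto_const_div_atTop_nhds_zero_nat _)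
      gcongr
      rw [le_div_iff₀ hp]; exact g7 N p
  rw [integral_zero] at hlim
  intro ε hε
  filter_upwards [hlim.eventually (gt_mem_nhds hε), eventually_gt_atTop 0] with N hN hN0
  refine (g4 N).trans ?_
  rw [integral_div] at hN
  have : (0:ℝ) < N := by exact_mod_cast hN0
  rw [div_lt_iff₀ this] at hN
  exact hN.le


def xLp {Ω : Type*} [MeasurableSpace Ω] (f : Ω → ℝ) (P : Measure Ω) : Prop :=
  ∀ p : NNReal, MemLp f p P

theorem xLp.integrable {Ω : Type*} [MeasurableSpace Ω] {f : Ω → ℝ} {P : Measure Ω} (h : xLp f P) :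
    Integrable f P := memLp_one_iff_integrable.mp (by simpa using h 1)

theorem xLp.add {Ω : Type*} [MeasurableSpace Ω] {f g : Ω → ℝ} {P : Measure Ω} (h : xLp f P)
    (h' : xLp g P) : xLp (fun ω => f ω + g ω) P := fun p => (h p).add (h' p)

theorem xLp.mul {Ω : Type*} [MeasurableSpace Ω] {f g : Ω → ℝ} {P : Measure Ω} (h : xLp f P)
    (h' : xLp g P) : xLp (fun ω => f ω * g ω) P := fun p => by
  have i : ENNReal.HolderTriple ((2 * p : NNReal) : ENNReal) ((2 * p : NNReal) : ENNReal) (p : ENNReal) := by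
    constructor
    rw [← two_mul]
    push_cast
    rw [ENNReal.mul_inv (by simp) (by simp), ← mul_assoc, ENNReal.mul_inv_cancel (by simp) (by simp), one_mul]
  exact MemLp.mul (h' (2 * p)) (h (2 * p))

theorem xLp_const {Ω : Type*} [MeasurableSpace Ω] {P : Measure Ω} [IsFiniteMeasure P] (c : ℝ) :
    xLp (fun _ => c) P := fun _ => memLp_const c

theorem xLp_sum {Ω ι : Type*} [MeasurableSpace Ω] {P : Measure Ω} (s : Finset ι) {f : ι → Ω → ℝ}
    (h : ∀ i ∈ s, xLp (f i) P) : xLp (fun ω => ∑ i ∈ s, f i ω) P := fun p =>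
  memLp_finset_sum s fun i hi => h i hi p

/-- matrices with entries in all `L^p` -/
def xML {Ω : Type*} [MeasurableSpace Ω] {N : ℕ} (A : Ω → Matrix (Fin N) (Fin N) ℝ) (P : Measure Ω) : Prop :=
  ∀ i j, xLp (fun ω => A ω i j) P

section
variable {Ω : Type*} [MeasurableSpace Ω] {N : ℕ} {P : Measure Ω} [IsFiniteMeasure P]
  {A B : Ω → Matrix (Fin N) (Fin N) ℝ}

theorem xML.add (hA : xML A P) (hB : xML B P) : xML (fun ω => A ω + B ω) P := fun i j =>
  (hA i j).add (hB i j)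

theorem xML.mul (hA : xML A P) (hB : xML B P) : xML (fun ω => A ω * B ω) P := fun i j => by
  simp only [Matrix.mul_apply]
  exact xLp_sum _ fun k _ => (hA i k).mul (hB k j)

theorem xML_const (C : Matrix (Fin N) (Fin N) ℝ) : xML (fun _ => C) P := fun i j => xLp_const _

theorem xML.pow (hA : xML A P) (n : ℕ) : xML (fun ω => A ω ^ n) P := by
  induction n with
  | zero => simp only [pow_zero]; exact xML_const _
  | succ n ih => simp only [pow_succ]; exact ih.mul hA

theorem xML.xS (hA : xML A P) (hB : xML B P) (n k : ℕ) : xML (fun ω => xS (A ω) (B ω) n k) P := by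
  induction n generalizing k with
  | zero => cases k <;> exact xML_const _
  | succ n ih =>
    cases k with
    | zero => exact hA.mul (ih 0)
    | succ k => exact (hA.mul (ih (k+1))).add (hB.mul (ih k))

theorem xML.trace (hA : xML A P) : Integrable (fun ω => (A ω).trace) P := by
  have : xLp (fun ω => (A ω).trace) P := xLp_sum _ fun i _ => hA i i
  exact this.integrable
end

theorem xmom {Ω : Type*} [MeasurableSpace Ω] {N : ℕ} {P : Measure Ω} [IsProbabilityMeasure P]
    {A : Ω → Matrix (Fin N) (Fin N) ℝ} (hA : xML A P) (hH : ∀ ω, (A ω).IsHermitian) (q : ℕ)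
    (hrot : ∀ s : ℝ, ∫ z, ((A z.1 + s • A z.2) ^ (2 * q + 2)).trace ∂(P.prod P) =
      (1 + s ^ 2) ^ (q + 1) * ∫ ω, (A ω ^ (2 * q + 2)).trace ∂P) :
    ∫ ω, (A ω ^ (2 * q + 2)).trace ∂P ≤
      8 * ((q : ℝ) + 1) * ∫ ω, ∫ ω', (A ω' * A ω' * A ω ^ (2 * q)).trace ∂P ∂P := by
  have hA1 : xML (fun z : Ω × Ω => A z.1) (P.prod P) := fun i j p => (hA i j p).comp_fst P
  have hA2 : xML (fun z : Ω × Ω => A z.2) (P.prod P) := fun i j p => (hA i j p).comp_snd P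
  set c := ∫ ω, (A ω ^ (2 * q + 2)).trace ∂P
  set a : ℕ → ℝ := fun k => ∫ z, (xS (A z.1) (A z.2) (2 * q + 2) k).trace ∂(P.prod P) with ha
  have hint : ∀ k, Integrable (fun z : Ω × Ω => (xS (A z.1) (A z.2) (2 * q + 2) k).trace) (P.prod P) :=
    fun k => (hA1.xS hA2 _ k).trace
  have h1 : ∀ s : ℝ, ∑ k ∈ Finset.range (2 * q + 3), a k * s ^ k = (1 + s ^ 2) ^ (q + 1) * c := by
    intro s
    rw [← hrot s]
    simp only [xS_sum, Matrix.trace_sum, Matrix.trace_smul, smul_eq_mul]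
    rw [integral_finsetSum _ fun k _ => (hint k).const_mul _]
    refine Finset.sum_congr rfl fun k _ => ?_
    rw [integral_const_mul, mul_comm]
  have h2 : (∑ k ∈ Finset.range (2 * q + 3), Polynomial.C (a k) * Polynomial.X ^ k : Polynomial ℝ) =
      Polynomial.expand ℝ 2 ((1 + Polynomial.X) ^ (q + 1)) * Polynomial.C c := by
    refine Polynomial.funext fun s => ?_
    simp only [Polynomial.eval_finset_sum, Polynomial.eval_mul, Polynomial.eval_C, Polynomial.eval_pow,
      Polynomial.eval_X, Polynomial.expand_eval, Polynomial.eval_add, Polynomial.eval_one]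
    exact h1 s
  have h3 := congrArg (fun p => Polynomial.coeff p 2) h2
  simp only [Polynomial.finset_sum_coeff, Polynomial.coeff_C_mul, Polynomial.coeff_X_pow,
    Polynomial.coeff_mul_C, mul_ite, mul_one, mul_zero, Finset.sum_ite_eq, Finset.mem_range] at h3
  rw [if_pos (by omega), Polynomial.coeff_expand (by norm_num), if_pos (by norm_num),
    Polynomial.coeff_one_add_X_pow] at h3
  simp only [Nat.reduceDiv, Nat.choose_one_right] at h3
  have h4 : a 2 ≤ ∫ z, 8 * ((q:ℝ) + 1)^2 * (A z.2 * A z.2 * A z.1 ^ (2 * q)).trace ∂(P.prod P) := by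
    refine integral_mono (hint 2) (((hA2.mul hA2).mul (hA1.pow _)).trace.const_mul _) fun z => ?_
    exact xS2 (hH _) (hH _) q
  rw [integral_const_mul, integral_prod _ ((hA2.mul hA2).mul (hA1.pow _)).trace, h3] at h4
  have hq : (0:ℝ) < q + 1 := by positivity
  push_cast at h4
  have h5 : ((q:ℝ)+1) * c ≤ ((q:ℝ)+1) * (8 * ((q : ℝ) + 1) * ∫ ω, ∫ ω', (A ω' * A ω' * A ω ^ (2 * q)).trace ∂P ∂P) := by
    refine h4.trans (le_of_eq ?_); ring
  exact le_of_mul_le_mul_left h5 hq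

theorem xrot {Ω ι : Type*} [MeasurableSpace Ω] [Fintype ι] {P : Measure Ω} [IsProbabilityMeasure P]
    {Y : Ω → ι → ℝ} (hm : Measurable Y)
    (hg : ∀ t : ι → ℝ, ∃ v : NNReal, P.map (fun ω => ∑ i, t i * Y ω i) = gaussianReal 0 v) (s : ℝ) :
    (P.prod P).map (fun z => Y z.1 + s • Y z.2) = P.map (fun ω => √(1 + s ^ 2) • Y ω) := by
  have m1 : Measurable (fun z : Ω × Ω => Y z.1 + s • Y z.2) := by fun_prop
  have m2 : Measurable (fun ω => √(1 + s ^ 2) • Y ω) := by fun_prop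
  have := Measure.isProbabilityMeasure_map (μ := P.prod P) m1.aemeasurable
  have := Measure.isProbabilityMeasure_map (μ := P) m2.aemeasurable
  refine Measure.ext_of_charFunDual ?_
  ext L
  classical
  obtain ⟨v, hv⟩ := hg (fun i => L (Pi.single i 1))
  have hL : ∀ y : ι → ℝ, L y = ∑ i, L (Pi.single i 1) * y i := fun y => by
    conv_lhs => rw [← Finset.univ_sum_single y]
    rw [map_sum]
    refine Finset.sum_congr rfl fun i _ => ?_
    have : Pi.single i (y i) = y i • (Pi.single i (1:ℝ) : ι → ℝ) := by
      rw [← Pi.single_smul]; simp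
    rw [this, map_smul, smul_eq_mul, mul_comm]
  simp only [← hL] at hv
  have mL : Measurable (fun ω => L (Y ω)) := L.continuous.measurable.comp hm
  have key : ∀ r : ℝ, ∫ ω, Complex.exp ((r * L (Y ω) : ℝ) * Complex.I) ∂P =
      Complex.exp (- (v * r ^ 2 / 2)) := fun r => by
    have := charFun_gaussianReal (μ := 0) (v := v) r
    rw [← hv, charFun_apply_real, integral_map mL.aemeasurable (by fun_prop)] at this
    push_cast
    rw [this]
    congr 1; push_cast; ring
  rw [charFunDual_apply, charFunDual_apply, integral_map m1.aemeasurable (by fun_prop),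
    integral_map m2.aemeasurable (by fun_prop)]
  simp only [map_add, map_smul, smul_eq_mul]
  rw [key]
  have : ∀ z : Ω × Ω, Complex.exp (((L (Y z.1) + s * L (Y z.2) : ℝ) : ℂ) * Complex.I) =
     Complex.exp ((1 * L (Y z.1) : ℝ) * Complex.I) * Complex.exp ((s * L (Y z.2) : ℝ) * Complex.I) := fun z => by
    rw [← Complex.exp_add]; push_cast; congr 1; ring
  simp only [this]
  rw [integral_prod_mul (fun ω => Complex.exp ((1 * L (Y ω) : ℝ) * Complex.I)) (fun ω => Complex.exp ((s * L (Y ω) : ℝ) * Complex.I)),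
    key, key, ← Complex.exp_add]
  congr 1
  have : ((√(1 + s^2) : ℝ) : ℂ) ^ 2 = 1 + (s:ℂ)^2 := by
    rw [← Complex.ofReal_pow, Real.sq_sqrt (by positivity)]; push_cast; ring
  rw [this]; push_cast; ring


theorem xyoung (f t η : ℝ) (hf : 0 ≤ f) (ht : 0 ≤ t) (hη : 0 < η) (q : ℕ) :
    f * t ^ q ≤ η * t ^ (q + 1) + (η⁻¹) ^ q * f ^ (q + 1) := by
  rcases le_total f (η * t) with h | h
  · have : f * t ^ q ≤ (η * t) * t ^ q := by gcongr
    have h2 : 0 ≤ (η⁻¹) ^ q * f ^ (q + 1) := by positivity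
    rw [pow_succ t]; linarith
  · have h1 : t ≤ η⁻¹ * f := by rwa [le_inv_mul_iff₀ hη]
    have : f * t ^ q ≤ f * (η⁻¹ * f) ^ q := by gcongr
    have h2 : 0 ≤ η * t ^ (q + 1) := by positivity
    rw [mul_pow] at this
    rw [pow_succ f]; linarith

theorem xcosint (n : ℤ) : ∫ x in (-π)..π, cos ((n:ℝ) * x) = if n = 0 then 2 * π else 0 := by
  split_ifs with h
  · subst h; simp; ring
  · have : (n:ℝ) ≠ 0 := by exact_mod_cast h
    rw [intervalIntegral.integral_comp_mul_left (fun x => cos x) this, integral_cos, mul_neg, sin_neg, sin_int_mul_pi]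
    simp

theorem xt_cont {N : ℕ} (z : Fin N → ℝ) : Continuous (xt z) := by
  unfold xt xc xs; fun_prop

theorem xt_box {N : ℕ} (z : Fin N → ℝ) : ∫ x in Set.Ioc (-π) π, xt z x = 2 * π * ∑ k, z k ^ 2 := by
  rw [← intervalIntegral.integral_of_le (by linarith [pi_pos])]
  simp only [xt_eq]
  rw [intervalIntegral.integral_finsetSum fun k _ => by
    apply Continuous.intervalIntegrable; fun_prop]
  rw [Finset.mul_sum]
  refine Finset.sum_congr rfl fun k _ => ?_
  rw [intervalIntegral.integral_finsetSum fun k _ => by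
    apply Continuous.intervalIntegrable; fun_prop]
  rw [Finset.sum_eq_single k]
  · rw [intervalIntegral.integral_const_mul]
    have := xcosint 0
    simp only [Int.cast_zero, if_true] at this
    rw [sub_self, this]; ring
  · intro l _ hl
    rw [intervalIntegral.integral_const_mul]
    have := xcosint (((k:ℕ):ℤ) - ((l:ℕ):ℤ))
    push_cast at this
    rw [this, if_neg, mul_zero]
    intro h
    apply hl
    ext; omega
  · simp

theorem xbox_eq : (volume : Measure (ℝ × ℝ)).restrict specBox =
    (volume.restrict (Set.Ioc (-π) π)).prod (volume.restrict (Set.Ioc (-π) π)) := by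
  rw [Measure.prod_restrict]; rfl

instance xbox_fin : IsFiniteMeasure ((volume : Measure (ℝ × ℝ)).restrict specBox) := by
  rw [xbox_eq]; infer_instance

theorem xq_box {N : ℕ} (z : Fin N → ℝ) : ∫ p in specBox, xq z p = 8 * π ^ 2 * ∑ k, z k ^ 2 := by
  have hi : Integrable (xt z) (volume.restrict (Set.Ioc (-π) π)) :=
    (xt_cont z).integrableOn_Ioc
  rw [xbox_eq]
  simp only [xq]
  rw [integral_add (hi.comp_fst _) (hi.comp_snd _), integral_fun_fst, integral_fun_snd, xt_box]
  have : (volume.restrict (Set.Ioc (-π) π)).real Set.univ = 2 * π := by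
    rw [measureReal_restrict_apply_univ, Real.volume_real_Ioc_of_le (by linarith [pi_pos])]; ring
  rw [this]; simp only [smul_eq_mul]; ring

theorem xq_sumU {N : ℕ} {U G : Matrix (Fin N) (Fin N) ℝ} (h2 : U * U.transpose = 1)
    (hG : G.transpose = G) (hc : ∀ v : Fin N → ℝ, ∑ i, (G.mulVec v i) ^ 2 ≤ ∑ i, v i ^ 2)
    (p : ℝ × ℝ) : ∑ j, xq (G.mulVec (fun k => U k j)) p ≤ 2 * N := by
  have key : ∀ w : Fin N → ℝ, ∑ j, (∑ k, G.mulVec (fun k => U k j) k * w k) ^ 2 ≤ ∑ k, w k ^ 2 := by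
    intro w
    refine le_trans (le_of_eq ?_) (hc w)
    rw [← xnormU h2 (G.mulVec w)]
    refine Finset.sum_congr rfl fun j _ => ?_
    congr 1
    change G.mulVec (fun k => U k j) ⬝ᵥ w = (fun k => U k j) ⬝ᵥ G.mulVec w
    rw [Matrix.dotProduct_mulVec, ← Matrix.mulVec_transpose, hG]
  simp only [xq, xt, Finset.sum_add_distrib]
  have := key (xc p.1)
  have := key (xs p.1)
  have := key (xc p.2)
  have := key (xs p.2)
  have := xcs_norm (N := N) p.1
  have := xcs_norm (N := N) p.2
  linarith

section
variable {Ω : Type} [MeasurableSpace Ω] {P : Measure Ω} [IsProbabilityMeasure P]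
  {X : ℤ → ℤ → Ω → ℝ} {ν νd : Measure (ℝ × ℝ)} {f : ℝ × ℝ → ℝ}

/-- vectorised field -/
def xY (X : ℤ → ℤ → Ω → ℝ) (N : ℕ) (ω : Ω) : Fin N × Fin N → ℝ :=
  fun i => X ((i.1 : ℕ) + 1) ((i.2 : ℕ) + 1) ω

theorem xY_gauss (hX : StatGauss P X) (N : ℕ) (t : Fin N × Fin N → ℝ) :
    ∃ v : NNReal, P.map (fun ω => ∑ i, t i * xY X N ω i) = gaussianReal 0 v := by
  let e : Fin N × Fin N ↪ ℤ × ℤ := ⟨fun i => (((i.1 : ℕ) : ℤ) + 1, ((i.2 : ℕ) : ℤ) + 1), by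
    rintro ⟨a, b⟩ ⟨c, d⟩ h
    simp only [Prod.mk.injEq] at h
    ext <;> simp <;> omega⟩
  obtain ⟨v, hv⟩ := hX.gauss ((Finsupp.equivFunOnFinite.symm t).embDomain e)
  refine ⟨v, ?_⟩
  rw [← hv]
  congr 1
  ext ω
  have := Finsupp.sum_embDomain (f := e) (v := Finsupp.equivFunOnFinite.symm t) (g := fun p a => a * X p.1 p.2 ω)
  rw [Finsupp.sum, Finsupp.sum_fintype _ _ (by simp)] at this
  rw [this]
  rfl

theorem xX_Lp (hX : StatGauss P X) (j k : ℤ) : xLp (X j k) P := by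
  intro p
  obtain ⟨v, hv⟩ := hX.gauss (Finsupp.single (j, k) 1)
  have e : (fun ω => ∑ p ∈ (Finsupp.single (j, k) (1:ℝ)).support, (Finsupp.single (j, k) (1:ℝ)) p * X p.1 p.2 ω) = X j k := by
    ext ω
    rw [Finsupp.support_single_ne_zero _ one_ne_zero]; simp
  rw [e] at hv
  have := memLp_id_gaussianReal (μ := 0) (v := v) p
  rw [← hv, memLp_map_measure_iff (by fun_prop) (hX.meas j k).aemeasurable] at this
  exact this

theorem xR (hX : StatGauss P X) (hν : SpectralDecomp P X ν νd f) (j k u v : ℤ) :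
    ∫ ω, X j k ω * X (j + u) (k + v) ω ∂P = ∫ p, cos ((u:ℝ) * p.1 + (v:ℝ) * p.2) ∂ν := by
  have := hν.finite
  rw [hX.stat]
  have h := congrArg Complex.re (hν.herglotz u v)
  rw [Complex.ofReal_re] at h
  rw [← h, ← RCLike.re_eq_complex_re, ← integral_re]
  · congr 1; ext p
    rw [RCLike.re_eq_complex_re, mul_comm, Complex.exp_ofReal_mul_I_re]
  · refine Integrable.of_bound (C := 1) (by fun_prop) (Eventually.of_forall fun p => ?_)
    rw [mul_comm, Complex.norm_exp_ofReal_mul_I]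

theorem xrow (hX : StatGauss P X) (hν : SpectralDecomp P X ν νd f) (N : ℕ) (a : ℤ) (z : Fin N → ℝ) :
    ∫ ω, (∑ k : Fin N, X a ((k:ℕ) + 1) ω * z k) ^ 2 ∂P = ∫ p, xt z p.2 ∂ν := by
  have := hν.finite
  simp only [xt_eq, sq, Finset.sum_mul_sum]
  have i1 : ∀ k l : Fin N, Integrable (fun ω => X a ((k:ℕ) + 1) ω * z k * (X a ((l:ℕ) + 1) ω * z l)) P := fun k l =>
    (((xX_Lp hX _ _).mul (xLp_const _)).mul ((xX_Lp hX _ _).mul (xLp_const _))).integrable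
  have i2 : ∀ k l : Fin N, Integrable (fun p : ℝ × ℝ => z k * z l * cos ((((k : ℕ) : ℝ) - ((l : ℕ) : ℝ)) * p.2)) ν := fun k l => by
    have h2 := xcos_int ν 0 (((k : ℕ) : ℝ) - ((l : ℕ) : ℝ))
    simp only [zero_mul, zero_add] at h2
    exact h2.const_mul _
  rw [integral_finsetSum _ fun k _ => integrable_finsetSum _ fun l _ => i1 k l,
    integral_finsetSum _ fun k _ => integrable_finsetSum _ fun l _ => i2 k l]
  refine Finset.sum_congr rfl fun k _ => ?_
  rw [integral_finsetSum _ fun l _ => i1 k l, integral_finsetSum _ fun l _ => i2 k l]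
  refine Finset.sum_congr rfl fun l _ => ?_
  have h := xR hX hν a ((l:ℕ) + 1) 0 ((k:ℕ) - (l:ℕ))
  rw [integral_const_mul]
  have e : ((l:ℕ):ℤ) + 1 + (((k:ℕ):ℤ) - ((l:ℕ):ℤ)) = ((k:ℕ):ℤ) + 1 := by ring
  rw [e, add_zero] at h
  push_cast at h
  simp only [zero_mul, zero_add] at h
  rw [← h, ← integral_const_mul]
  congr 1; ext ω; ring

theorem xcol (hX : StatGauss P X) (hν : SpectralDecomp P X ν νd f) (N : ℕ) (a : ℤ) (z : Fin N → ℝ) :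
    ∫ ω, (∑ k : Fin N, X ((k:ℕ) + 1) a ω * z k) ^ 2 ∂P = ∫ p, xt z p.1 ∂ν := by
  have := hν.finite
  simp only [xt_eq, sq, Finset.sum_mul_sum]
  have i1 : ∀ k l : Fin N, Integrable (fun ω => X ((k:ℕ) + 1) a ω * z k * (X ((l:ℕ) + 1) a ω * z l)) P := fun k l =>
    (((xX_Lp hX _ _).mul (xLp_const _)).mul ((xX_Lp hX _ _).mul (xLp_const _))).integrable
  have i2 : ∀ k l : Fin N, Integrable (fun p : ℝ × ℝ => z k * z l * cos ((((k : ℕ) : ℝ) - ((l : ℕ) : ℝ)) * p.1)) ν := fun k l => by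
    have h2 := xcos_int ν (((k : ℕ) : ℝ) - ((l : ℕ) : ℝ)) 0
    simp only [zero_mul, add_zero] at h2
    exact h2.const_mul _
  rw [integral_finsetSum _ fun k _ => integrable_finsetSum _ fun l _ => i1 k l,
    integral_finsetSum _ fun k _ => integrable_finsetSum _ fun l _ => i2 k l]
  refine Finset.sum_congr rfl fun k _ => ?_
  rw [integral_finsetSum _ fun l _ => i1 k l, integral_finsetSum _ fun l _ => i2 k l]
  refine Finset.sum_congr rfl fun l _ => ?_
  have h := xR hX hν ((l:ℕ) + 1) a ((k:ℕ) - (l:ℕ)) 0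
  rw [integral_const_mul]
  have e : ((l:ℕ):ℤ) + 1 + (((k:ℕ):ℤ) - ((l:ℕ):ℤ)) = ((k:ℕ):ℤ) + 1 := by ring
  rw [e, add_zero] at h
  push_cast at h
  simp only [zero_mul, add_zero] at h
  rw [← h, ← integral_const_mul]
  congr 1; ext ω; ring

theorem xW_ML (hX : StatGauss P X) (N : ℕ) : xML (scaledW X N) P := fun i j =>
  (xLp_const _).mul ((xX_Lp hX _ _).add (xX_Lp hX _ _))

theorem xW_herm (N : ℕ) (ω : Ω) : (scaledW X N ω).IsHermitian := by
  ext i j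
  simp only [Matrix.conjTranspose_apply, star_trivial, scaledW]
  rw [add_comm]

theorem xWz (hX : StatGauss P X) (hν : SpectralDecomp P X ν νd f) (N : ℕ) (z : Fin N → ℝ) :
    ∫ ω, ∑ i, ((scaledW X N ω).mulVec z i) ^ 2 ∂P ≤ 2 * ∫ p, xq z p ∂ν := by
  have := hν.finite
  have l1 : ∀ i : Fin N, Integrable (fun ω => (∑ k : Fin N, X ((i:ℕ)+1) ((k:ℕ) + 1) ω * z k) ^ 2) P := fun i => by
    simp only [sq]
    have : xLp (fun ω => ∑ k : Fin N, X ((i:ℕ)+1) ((k:ℕ) + 1) ω * z k) P := xLp_sum _ fun k _ => (xX_Lp hX _ _).mul (xLp_const _)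
    exact (this.mul this).integrable
  have l2 : ∀ i : Fin N, Integrable (fun ω => (∑ k : Fin N, X ((k:ℕ) + 1) ((i:ℕ)+1) ω * z k) ^ 2) P := fun i => by
    simp only [sq]
    have : xLp (fun ω => ∑ k : Fin N, X ((k:ℕ) + 1) ((i:ℕ)+1) ω * z k) P := xLp_sum _ fun k _ => (xX_Lp hX _ _).mul (xLp_const _)
    exact (this.mul this).integrable
  have l3 : ∀ i : Fin N, Integrable (fun ω => ((scaledW X N ω).mulVec z i) ^ 2) P := fun i => by
    simp only [sq]
    simp only [Matrix.mulVec, dotProduct]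
    have : xLp (fun ω => ∑ k, scaledW X N ω i k * z k) P := xLp_sum _ fun k _ => (xW_ML hX N i k).mul (xLp_const _)
    exact (this.mul this).integrable
  rw [integral_finsetSum _ fun i _ => l3 i]
  have hb : ∀ i : Fin N, ∫ ω, ((scaledW X N ω).mulVec z i) ^ 2 ∂P ≤ (N:ℝ)⁻¹ * (2 * ∫ p, xq z p ∂ν) := by
    intro i
    have : ∫ p, xq z p ∂ν = ∫ p, xt z p.2 ∂ν + ∫ p, xt z p.1 ∂ν := by
      have j1 : ∀ g : ℝ × ℝ → ℝ, Continuous g → Integrable (fun p => xt z (g p)) ν := fun g hg => by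
        simp only [xt_eq]
        refine integrable_finsetSum _ fun k _ => integrable_finsetSum _ fun l _ => Integrable.const_mul ?_ _
        refine Integrable.of_bound (C := 1) (by fun_prop) (Eventually.of_forall fun p => ?_)
        simpa using abs_cos_le_one _
      rw [← integral_add (j1 _ continuous_snd) (j1 _ continuous_fst)]
      congr 1; ext p; rw [xq, add_comm]
    rw [this, ← xrow hX hν N ((i:ℕ)+1) z, ← xcol hX hν N ((i:ℕ)+1) z, ← integral_add (l1 i) (l2 i), ← integral_const_mul,
      ← integral_const_mul]
    refine integral_mono (l3 i) ((((l1 i).add (l2 i)).const_mul _).const_mul _) fun ω => ?_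
    have e : (scaledW X N ω).mulVec z i = (√N)⁻¹ * (∑ k : Fin N, X ((i:ℕ)+1) ((k:ℕ) + 1) ω * z k + ∑ k : Fin N, X ((k:ℕ) + 1) ((i:ℕ)+1) ω * z k) := by
      rw [← Finset.sum_add_distrib, Finset.mul_sum]
      simp only [Matrix.mulVec, dotProduct]
      refine Finset.sum_congr rfl fun k _ => ?_
      simp only [scaledW]; ring
    simp only [e, mul_pow, inv_pow]
    rw [Real.sq_sqrt (by positivity)]
    refine mul_le_mul_of_nonneg_left ?_ (by positivity)
    nlinarith [sq_nonneg (∑ k : Fin N, X ((i:ℕ)+1) ((k:ℕ) + 1) ω * z k - ∑ k : Fin N, X ((k:ℕ) + 1) ((i:ℕ)+1) ω * z k)]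
  refine (Finset.sum_le_sum fun i _ => hb i).trans ?_
  rw [Finset.sum_const, Finset.card_univ, Fintype.card_fin, nsmul_eq_mul, ← mul_assoc]
  have h0 : 0 ≤ ∫ p, xq z p ∂ν := integral_nonneg fun p => xq_nonneg _ _
  rcases Nat.eq_zero_or_pos N with h | h
  · subst h; simp; exact h0
  · rw [mul_inv_cancel₀ (by positivity), one_mul]

theorem xWfrob (hX : StatGauss P X) (N : ℕ) :
    ∫ ω, xfrob (scaledW X N ω) ∂P ≤ 4 * (∫ ω, X 0 0 ω * X 0 0 ω ∂P) * N := by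
  set R := ∫ ω, X 0 0 ω * X 0 0 ω ∂P
  have hR : ∀ j k, ∫ ω, X j k ω * X j k ω ∂P = R := fun j k => by
    have := hX.stat j k 0 0; simpa using this
  have hR0 : 0 ≤ R := integral_nonneg fun ω => mul_self_nonneg _
  have l3 : ∀ i j : Fin N, Integrable (fun ω => (scaledW X N ω i j) ^ 2) P := fun i j => by
    simp only [sq]; exact ((xW_ML hX N i j).mul (xW_ML hX N i j)).integrable
  have l4 : ∀ j k, Integrable (fun ω => X j k ω * X j k ω) P := fun j k =>
    ((xX_Lp hX j k).mul (xX_Lp hX j k)).integrable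
  have hb : ∀ i j : Fin N, ∫ ω, (scaledW X N ω i j) ^ 2 ∂P ≤ (N:ℝ)⁻¹ * (4 * R) := fun i j => by
    have : 4 * R = 2 * (∫ ω, X ((i:ℕ)+1) ((j:ℕ)+1) ω * X ((i:ℕ)+1) ((j:ℕ)+1) ω ∂P + ∫ ω, X ((j:ℕ)+1) ((i:ℕ)+1) ω * X ((j:ℕ)+1) ((i:ℕ)+1) ω ∂P) := by
      rw [hR, hR]; ring
    rw [this, ← integral_add (l4 _ _) (l4 _ _), ← integral_const_mul, ← integral_const_mul]
    refine integral_mono (l3 i j) ((((l4 _ _).add (l4 _ _)).const_mul _).const_mul _) fun ω => ?_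
    simp only [scaledW, mul_pow, inv_pow]
    rw [Real.sq_sqrt (by positivity)]
    refine mul_le_mul_of_nonneg_left ?_ (by positivity)
    nlinarith [sq_nonneg (X ((i:ℕ)+1) ((j:ℕ)+1) ω - X ((j:ℕ)+1) ((i:ℕ)+1) ω)]
  unfold xfrob
  rw [integral_finsetSum _ fun i _ => integrable_finsetSum _ fun j _ => l3 i j]
  have : ∀ i : Fin N, ∫ ω, ∑ j, (scaledW X N ω i j) ^ 2 ∂P ≤ N * ((N:ℝ)⁻¹ * (4 * R)) := fun i => by
    rw [integral_finsetSum _ fun j _ => l3 i j]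
    refine (Finset.sum_le_sum fun j _ => hb i j).trans ?_
    simp
  refine (Finset.sum_le_sum fun i _ => this i).trans ?_
  rw [Finset.sum_const, Finset.card_univ, Fintype.card_fin, nsmul_eq_mul]
  rcases Nat.eq_zero_or_pos N with h | h
  · subst h; simp
  · rw [← mul_assoc (N:ℝ) _ (4 * R), mul_inv_cancel₀ (by positivity)]; apply le_of_eq; ring

theorem xrotA (hX : StatGauss P X) (N : ℕ) (G : Matrix (Fin N) (Fin N) ℝ) (q : ℕ) (s : ℝ) :
    ∫ z, ((G * scaledW X N z.1 * G + s • (G * scaledW X N z.2 * G)) ^ (2 * q + 2)).trace ∂(P.prod P) =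
      (1 + s ^ 2) ^ (q + 1) * ∫ ω, ((G * scaledW X N ω * G) ^ (2 * q + 2)).trace ∂P := by
  let L : (Fin N × Fin N → ℝ) → Matrix (Fin N) (Fin N) ℝ := fun y =>
    G * Matrix.of (fun i j => (√N)⁻¹ * (y (i, j) + y (j, i))) * G
  have hL : ∀ ω, L (xY X N ω) = G * scaledW X N ω * G := fun ω => rfl
  have hLadd : ∀ y y', L (y + y') = L y + L y' := fun y y' => by
    simp only [L]; rw [← add_mul, ← mul_add]; congr 2; ext i j; simp; ring
  have hLs : ∀ (c : ℝ) y, L (c • y) = c • L y := fun c y => by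
    simp only [L]; rw [← Matrix.smul_mul, ← Matrix.mul_smul]; congr 2; ext i j; simp; ring
  have hLc : Continuous (fun y => ((L y) ^ (2*q+2)).trace) := by
    refine Continuous.matrix_trace (Continuous.pow ?_ _)
    refine (continuous_const.mul ?_).mul continuous_const
    refine continuous_matrix fun i j => ?_
    simp only [Matrix.of_apply]; fun_prop
  have hm : Measurable (xY X N) := measurable_pi_lambda _ fun i => hX.meas _ _
  have m1 : Measurable (fun z : Ω × Ω => xY X N z.1 + s • xY X N z.2) := by fun_prop
  have m2 : Measurable (fun ω => √(1 + s ^ 2) • xY X N ω) := by fun_prop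
  have h := congrArg (fun μ => ∫ y, ((L y) ^ (2*q+2)).trace ∂μ) (xrot hm (xY_gauss hX N) s)
  beta_reduce at h
  rw [integral_map m1.aemeasurable hLc.aestronglyMeasurable, integral_map m2.aemeasurable hLc.aestronglyMeasurable] at h
  simp only [hLadd, hLs, hL] at h
  rw [h, ← integral_const_mul]
  congr 1; ext ω
  rw [smul_pow, Matrix.trace_smul, smul_eq_mul, show 2 * q + 2 = 2 * (q+1) by ring, pow_mul, Real.sq_sqrt (by positivity)]

end


theorem xq_cont {N : ℕ} (z : Fin N → ℝ) : Continuous (xq z) :=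
  ((xt_cont z).comp continuous_fst).add ((xt_cont z).comp continuous_snd)

theorem xq_bdd {N : ℕ} (z : Fin N → ℝ) (p : ℝ × ℝ) : ‖xq z p‖ ≤ ∑ k, ∑ l, |z k * z l| * 2 := by
  rw [xq_eq, Real.norm_eq_abs]
  refine (Finset.abs_sum_le_sum_abs _ _).trans (Finset.sum_le_sum fun k _ => ?_)
  refine (Finset.abs_sum_le_sum_abs _ _).trans (Finset.sum_le_sum fun l _ => ?_)
  rw [abs_mul]
  refine mul_le_mul_of_nonneg_left ?_ (abs_nonneg _)
  refine (abs_add_le _ _).trans ?_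
  linarith [abs_cos_le_one ((((k : ℕ) : ℝ) - ((l : ℕ) : ℝ)) * p.1), abs_cos_le_one ((((k : ℕ) : ℝ) - ((l : ℕ) : ℝ)) * p.2)]

theorem xq_mul_int {N : ℕ} (z : Fin N → ℝ) {g : ℝ × ℝ → ℝ} {μ : Measure (ℝ × ℝ)} (hg : Integrable g μ) :
    Integrable (fun p => g p * xq z p) μ :=
  hg.mul_bdd (c := ∑ k, ∑ l, |z k * z l| * 2) (xq_cont z).aestronglyMeasurable (Eventually.of_forall (xq_bdd z))

section
variable {Ω : Type} [MeasurableSpace Ω] {P : Measure Ω} [IsProbabilityMeasure P]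
  {X : ℤ → ℤ → Ω → ℝ} {ν νd : Measure (ℝ × ℝ)} {f : ℝ × ℝ → ℝ}

theorem xνd_fin (hν : SpectralDecomp P X ν νd f) : IsFiniteMeasure νd := by
  have := hν.finite
  refine ⟨lt_of_le_of_lt ?_ (measure_lt_top ν Set.univ)⟩
  rw [hν.decomp, Measure.add_apply]; exact le_add_self

theorem xf_int (hν : SpectralDecomp P X ν νd f) : Integrable f (volume.restrict specBox) := by
  have := hν.finite
  refine ⟨hν.f_meas.aestronglyMeasurable, ?_⟩
  rw [hasFiniteIntegral_iff_ofReal (Eventually.of_forall hν.f_nonneg)]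
  have h : ν Set.univ < ⊤ := measure_lt_top ν Set.univ
  rw [hν.decomp, Measure.add_apply, withDensity_apply _ MeasurableSet.univ, Measure.restrict_univ] at h
  exact lt_of_le_of_lt le_self_add h

theorem xfm_int (hν : SpectralDecomp P X ν νd f) (m : ℕ)
    (hfm : ∫⁻ q in specBox, ENNReal.ofReal (f q) ^ m < ⊤) :
    Integrable (fun p => f p ^ m) (volume.restrict specBox) := by
  refine ⟨(hν.f_meas.pow_const m).aestronglyMeasurable, ?_⟩
  rw [hasFiniteIntegral_iff_ofReal (Eventually.of_forall fun p => pow_nonneg (hν.f_nonneg p) m)]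
  simpa only [ENNReal.ofReal_pow (hν.f_nonneg _)] using hfm

theorem xsplit (hν : SpectralDecomp P X ν νd f) {N : ℕ} (z : Fin N → ℝ) :
    ∫ p, xq z p ∂ν = (∫ p in specBox, f p * xq z p) + ∫ p, xq z p ∂νd := by
  have := hν.finite
  have := xνd_fin hν
  have h1 : IsFiniteMeasure ((volume.restrict specBox).withDensity (fun q => ENNReal.ofReal (f q))) :=
    isFiniteMeasure_withDensity_ofReal (xf_int hν).2
  conv_lhs => rw [hν.decomp]
  rw [integral_add_measure (xq_int _ z) (xq_int _ z)]
  congr 1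
  rw [integral_withDensity_eq_integral_toReal_smul hν.f_meas.ennreal_ofReal (Eventually.of_forall fun p => ENNReal.ofReal_lt_top)]
  simp only [ENNReal.toReal_ofReal (hν.f_nonneg _), smul_eq_mul]

theorem xinner (hν : SpectralDecomp P X ν νd f) (q : ℕ)
    (hfm : Integrable (fun p => f p ^ (q + 1)) (volume.restrict specBox)) {N : ℕ}
    {U G : Matrix (Fin N) (Fin N) ℝ} (h1 : U.transpose * U = 1) (h2 : U * U.transpose = 1)
    (hG : G.transpose = G) (hc : ∀ v : Fin N → ℝ, ∑ i, (G.mulVec v i) ^ 2 ≤ ∑ i, v i ^ 2)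
    (hd : ∀ v : Fin N → ℝ, ∫ p, xq (G.mulVec v) p ∂νd ≤ ∑ i, v i ^ 2)
    (d : Fin N → ℝ) (η : ℝ) (hη : 0 < η) :
    ∑ j, d j ^ (2 * q) * ∫ p, xq (G.mulVec (fun k => U k j)) p ∂ν ≤
      η * (8 * π ^ 2 + 1) * ∑ j, d j ^ (2 * q + 2) +
        (η⁻¹) ^ q * (2 * (∫ p in specBox, f p ^ (q + 1)) + 1) * N := by
  have hU : ∀ j, ∑ k, U k j ^ 2 = 1 := fun j => by
    have := congrFun (congrFun h1 j) j
    rw [Matrix.mul_apply, Matrix.one_apply_eq] at this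
    rw [← this]; exact Finset.sum_congr rfl fun k _ => by rw [Matrix.transpose_apply, sq]
  have hj : ∀ j, d j ^ (2 * q) * ∫ p, xq (G.mulVec (fun k => U k j)) p ∂ν ≤
      η * (8 * π ^ 2 + 1) * d j ^ (2 * q + 2) + ((η⁻¹) ^ q * (∫ p in specBox, f p ^ (q + 1) * xq (G.mulVec (fun k => U k j)) p) + (η⁻¹) ^ q) := by
    intro j
    set z := G.mulVec (fun k => U k j)
    have hz : ∑ k, z k ^ 2 ≤ 1 := (hc _).trans (hU j).le
    have hzd : ∫ p, xq z p ∂νd ≤ 1 := (hd _).trans (hU j).le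
    have ht : 0 ≤ d j ^ 2 := sq_nonneg _
    rw [xsplit hν, show 2 * q + 2 = 2 * (q + 1) by ring, pow_mul, pow_mul, mul_add]
    set t := d j ^ 2
    have a1 : t ^ q * ∫ p, xq z p ∂νd ≤ η * t ^ (q + 1) + (η⁻¹) ^ q := by
      have := xyoung 1 t η zero_le_one ht hη q
      have h3 : t ^ q * ∫ p, xq z p ∂νd ≤ t ^ q * 1 := mul_le_mul_of_nonneg_left hzd (by positivity)
      rw [one_pow, mul_one, one_mul] at this
      linarith
    have a2 : t ^ q * ∫ p in specBox, f p * xq z p ≤ η * t ^ (q + 1) * (8 * π ^ 2) + (η⁻¹) ^ q * ∫ p in specBox, f p ^ (q + 1) * xq z p := by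
      have i0 := xq_int (volume.restrict specBox) z
      have : t ^ q * ∫ p in specBox, f p * xq z p ≤ η * t ^ (q + 1) * (∫ p in specBox, xq z p) + (η⁻¹) ^ q * ∫ p in specBox, f p ^ (q + 1) * xq z p := by
        rw [← integral_const_mul, ← integral_const_mul, ← integral_const_mul,
          ← integral_add (i0.const_mul _) ((xq_mul_int z hfm).const_mul _)]
        refine integral_mono ((xq_mul_int z (xf_int hν)).const_mul _) ((i0.const_mul _).add ((xq_mul_int z hfm).const_mul _)) fun p => ?_
        have := mul_le_mul_of_nonneg_right (xyoung (f p) t η (hν.f_nonneg p) ht hη q) (xq_nonneg z p)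
        dsimp only [Pi.add_apply]
        linarith
      refine this.trans ?_
      gcongr
      rw [xq_box]
      exact mul_le_of_le_one_right (by positivity) hz
    linarith
  refine (Finset.sum_le_sum fun j _ => hj j).trans ?_
  rw [Finset.sum_add_distrib, ← Finset.mul_sum, Finset.sum_add_distrib, ← Finset.mul_sum,
    ← integral_finsetSum _ fun j _ => xq_mul_int _ hfm]
  have : ∫ p in specBox, ∑ j, f p ^ (q + 1) * xq (G.mulVec (fun k => U k j)) p ≤ (∫ p in specBox, f p ^ (q + 1)) * (2 * N) := by
    rw [← integral_mul_const]
    refine integral_mono (integrable_finsetSum _ fun j _ => xq_mul_int _ hfm) (hfm.mul_const _) fun p => ?_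
    dsimp only
    rw [← Finset.mul_sum]
    exact mul_le_mul_of_nonneg_left (xq_sumU h2 hG hc p) (pow_nonneg (hν.f_nonneg p) _)
  have h4 := mul_le_mul_of_nonneg_left this (show 0 ≤ (η⁻¹) ^ q by positivity)
  simp only [Finset.sum_const, Finset.card_univ, Fintype.card_fin, nsmul_eq_mul]
  linarith

theorem xmainb (hX : StatGauss P X) (hν : SpectralDecomp P X ν νd f) (q : ℕ)
    (hfm : Integrable (fun p => f p ^ (q + 1)) (volume.restrict specBox)) :
    ∃ C : ℝ, 0 ≤ C ∧ ∀ (N : ℕ) (G : Matrix (Fin N) (Fin N) ℝ), G.transpose = G →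
      (∀ v : Fin N → ℝ, ∑ i, (G.mulVec v i) ^ 2 ≤ ∑ i, v i ^ 2) →
      (∀ v : Fin N → ℝ, ∫ p, xq (G.mulVec v) p ∂νd ≤ ∑ i, v i ^ 2) →
      ∫ ω, ((G * scaledW X N ω * G) ^ (2 * q + 2)).trace ∂P ≤ C * N := by
  set F := ∫ p in specBox, f p ^ (q + 1)
  have hF : 0 ≤ F := integral_nonneg fun p => pow_nonneg (hν.f_nonneg p) _
  set η : ℝ := (32 * ((q:ℝ) + 1) * (8 * π ^ 2 + 1))⁻¹ with hηd
  have hη : 0 < η := by positivity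
  refine ⟨32 * ((q:ℝ) + 1) * ((η⁻¹) ^ q * (2 * F + 1)), by positivity, fun N G hG hc hd => ?_⟩
  have hH : ∀ ω, (G * scaledW X N ω * G).IsHermitian := fun ω => by
    have := xW_herm (X := X) N ω
    rw [Matrix.IsHermitian, Matrix.conjTranspose_eq_transpose_of_trivial] at this ⊢
    rw [Matrix.transpose_mul, Matrix.transpose_mul, hG, this, mul_assoc]
  have hA : xML (fun ω => G * scaledW X N ω * G) P := ((xML_const G).mul (xW_ML hX N)).mul (xML_const G)
  have hm := xmom hA hH q (fun s => xrotA hX N G q s)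
  have hin : ∀ ω, ∫ ω', ((G * scaledW X N ω' * G) * (G * scaledW X N ω' * G) * (G * scaledW X N ω * G) ^ (2 * q)).trace ∂P ≤
      2 * (η * (8 * π ^ 2 + 1) * ((G * scaledW X N ω * G) ^ (2 * q + 2)).trace + (η⁻¹) ^ q * (2 * F + 1) * N) := by
    intro ω
    obtain ⟨U, h1, h2, h3⟩ := xspec (hH ω)
    rw [xtrpow h1 h2 h3]
    set d := (hH ω).eigenvalues
    have e : ∀ ω', ((G * scaledW X N ω' * G) * (G * scaledW X N ω' * G) * (G * scaledW X N ω * G) ^ (2 * q)).trace =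
      ∑ j, d j ^ (2*q) * ∑ i, ((G * scaledW X N ω' * G).mulVec (fun k => U k j) i) ^ 2 := fun ω' => xtau (hH ω') h1 h2 h3 _
    simp only [e]
    have hI : ∀ z : Fin N → ℝ, Integrable (fun ω => ∑ i, ((scaledW X N ω).mulVec z i) ^ 2) P := fun z => by
      refine integrable_finsetSum _ fun i _ => ?_
      simp only [sq]
      simp only [Matrix.mulVec, dotProduct]
      have : xLp (fun ω => ∑ k, scaledW X N ω i k * z k) P := xLp_sum _ fun k _ => (xW_ML hX N i k).mul (xLp_const _)
      exact (this.mul this).integrable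
    have hI2 : ∀ z : Fin N → ℝ, Integrable (fun ω => ∑ i, ((G * scaledW X N ω * G).mulVec z i) ^ 2) P := fun z => by
      refine integrable_finsetSum _ fun i _ => ?_
      simp only [sq]
      simp only [Matrix.mulVec, dotProduct]
      have : xLp (fun ω => ∑ k, (G * scaledW X N ω * G) i k * z k) P := xLp_sum _ fun k _ => (hA i k).mul (xLp_const _)
      exact (this.mul this).integrable
    rw [integral_finsetSum _ fun j _ => (hI2 _).const_mul _]
    have hj : ∀ j, ∫ ω', d j ^ (2*q) * ∑ i, ((G * scaledW X N ω' * G).mulVec (fun k => U k j) i) ^ 2 ∂P ≤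
        2 * (d j ^ (2 * q) * ∫ p, xq (G.mulVec (fun k => U k j)) p ∂ν) := fun j => by
      rw [integral_const_mul]
      have h0 : 0 ≤ d j ^ (2 * q) := by rw [pow_mul]; positivity
      have h5 : ∫ ω', ∑ i, ((G * scaledW X N ω' * G).mulVec (fun k => U k j) i) ^ 2 ∂P ≤ 2 * ∫ p, xq (G.mulVec (fun k => U k j)) p ∂ν := by
        refine le_trans ?_ (xWz hX hν N _)
        refine integral_mono (hI2 _) (hI _) fun ω' => ?_
        dsimp only
        rw [← Matrix.mulVec_mulVec, ← Matrix.mulVec_mulVec]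
        exact hc _
      have := mul_le_mul_of_nonneg_left h5 h0
      linarith
    refine (Finset.sum_le_sum fun j _ => hj j).trans ?_
    rw [← Finset.mul_sum]
    exact mul_le_mul_of_nonneg_left (xinner hν q hfm h1 h2 hG hc hd d η hη) (by norm_num)
  have htr : Integrable (fun ω => ((G * scaledW X N ω * G) ^ (2 * q + 2)).trace) P := (hA.pow _).trace
  have h0 : ∀ ω, 0 ≤ ∫ ω', ((G * scaledW X N ω' * G) * (G * scaledW X N ω' * G) * (G * scaledW X N ω * G) ^ (2 * q)).trace ∂P :=
    fun ω => integral_nonneg fun ω' => xtau_nonneg (hH ω) (hH ω') q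
  have hout : ∫ ω, ∫ ω', ((G * scaledW X N ω' * G) * (G * scaledW X N ω' * G) * (G * scaledW X N ω * G) ^ (2 * q)).trace ∂P ∂P ≤
      2 * (η * (8 * π ^ 2 + 1) * (∫ ω, ((G * scaledW X N ω * G) ^ (2 * q + 2)).trace ∂P) + (η⁻¹) ^ q * (2 * F + 1) * N) := by
    refine (integral_mono_of_nonneg (Eventually.of_forall h0) (((htr.const_mul _).add (integrable_const _)).const_mul 2) (Eventually.of_forall hin)).trans ?_
    apply le_of_eq
    rw [integral_const_mul]
    congr 1
    simp only [Pi.add_apply]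
    rw [integral_add (htr.const_mul _) (integrable_const _), integral_const_mul]
    simp
  set T := ∫ ω, ((G * scaledW X N ω * G) ^ (2 * q + 2)).trace ∂P
  have h6 := mul_le_mul_of_nonneg_left hout (show 0 ≤ 8 * ((q:ℝ) + 1) by positivity)
  have h7 : 8 * ((q:ℝ) + 1) * (2 * (η * (8 * π ^ 2 + 1) * T)) = T / 2 := by
    have : η * (32 * ((q:ℝ) + 1) * (8 * π ^ 2 + 1)) = 1 := inv_mul_cancel₀ (by positivity)
    linear_combination (T / 2) * this
  have h8 := hm.trans h6
  rw [mul_add 2, mul_add, h7] at h8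
  linarith

end


theorem xfrob_nonneg {N : ℕ} (B : Matrix (Fin N) (Fin N) ℝ) : 0 ≤ xfrob B :=
  Finset.sum_nonneg fun _ _ => Finset.sum_nonneg fun _ _ => sq_nonneg _

theorem statement3 {Ω : Type} [MeasurableSpace Ω] (P : Measure Ω)
    [IsProbabilityMeasure P] (X : ℤ → ℤ → Ω → ℝ) (ν νd : Measure (ℝ × ℝ))
    (f : ℝ × ℝ → ℝ) (hX : StatGauss P X) (hν : SpectralDecomp P X ν νd f)
    (μf : Measure ℝ) (hμf : IsProbabilityMeasure μf)
    (hconv : ESDTendstoInProb P (scaledW X) μf)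
    (m : ℕ) (hm : 2 ≤ m)
    (hfm : ∫⁻ q in specBox, ENNReal.ofReal (f q) ^ m < ⊤) :
    ∫⁻ x, ENNReal.ofReal (x ^ (2 * m)) ∂μf < ⊤ := by
  have := xνd_fin hν
  obtain ⟨G, hG, hc, hd, hlim⟩ := xGlim νd hν.discrete
  obtain ⟨q, rfl⟩ : ∃ q, m = q + 1 := ⟨m - 1, by omega⟩
  obtain ⟨C, hC, hmain⟩ := xmainb hX hν q (xfm_int hν _ hfm)
  have hp : ∀ x : ℝ, 0 ≤ x ^ (2 * (q + 1)) := fun x => by rw [pow_mul]; positivity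
  have key : ∀ K : ℕ, ∫ x, min (x ^ (2 * (q + 1))) (K : ℝ) ∂μf ≤ 1 + 4 ^ (q + 1) * (2 * (C + 1)) := by
    intro K
    set R := ∫ ω, X 0 0 ω * X 0 0 ω ∂P
    have hR : 0 ≤ R := integral_nonneg fun ω => mul_self_nonneg _
    set M : ℝ := max 1 K
    have hM : 1 ≤ M := le_max_left _ _
    have hM0 : 0 < M := by linarith
    set η : ℝ := (8 * R * M + 1)⁻¹
    have hη : 0 < η := by positivity
    have hη1 : η * (8 * R * M + 1) = 1 := inv_mul_cancel₀ (by positivity)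
    set ε : ℝ := η / (2 * M)
    have hε : 0 < ε := by positivity
    have hε1 : M * (η⁻¹ * ε) = 1 / 2 := by simp only [ε]; field_simp
    have hcv := hconv (fun x => min (x ^ (2 * (q + 1))) (K : ℝ)) (by fun_prop)
      ⟨K, fun x => by
        rw [abs_of_nonneg (le_min (hp x) (Nat.cast_nonneg K))]; exact min_le_right _ _⟩ 1 one_pos
    have hev := hcv.eventually (gt_mem_nhds (show (0 : ENNReal) < 1 / 2 by simp))
    obtain ⟨N, ⟨hN1, hN2⟩, hN3⟩ := ((hev.and (hlim ε hε)).and (eventually_ge_atTop 1)).exists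
    have hNpos : (0:ℝ) < N := by exact_mod_cast hN3
    have hH : ∀ ω, (G N * scaledW X N ω * G N).IsHermitian := fun ω => by
      have := xW_herm (X := X) N ω
      rw [Matrix.IsHermitian, Matrix.conjTranspose_eq_transpose_of_trivial] at this ⊢
      rw [Matrix.transpose_mul, Matrix.transpose_mul, hG, this, mul_assoc]
    have hA : xML (fun ω => G N * scaledW X N ω * G N) P := ((xML_const _).mul (xW_ML hX N)).mul (xML_const _)
    have htr : Integrable (fun ω => ((G N * scaledW X N ω * G N) ^ (2 * (q + 1))).trace) P := (hA.pow _).trace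
    have hfr : Integrable (fun ω => xfrob (scaledW X N ω)) P := by
      unfold xfrob
      refine integrable_finsetSum _ fun i _ => integrable_finsetSum _ fun j _ => ?_
      simp only [sq]; exact ((xW_ML hX N i j).mul (xW_ML hX N i j)).integrable
    let Ψ : Ω → ℝ := fun ω => ((G N * scaledW X N ω * G N) ^ (2 * (q + 1))).trace +
      M * (η * xfrob (scaledW X N ω) + η⁻¹ * xfrob (1 - G N))
    have hΨi : Integrable Ψ P := htr.add (((hfr.const_mul _).add (integrable_const _)).const_mul _)
    have hΨ0 : ∀ ω, 0 ≤ Ψ ω := fun ω => by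
      have h1 := xfrob_nonneg (scaledW X N ω)
      have h2 := xfrob_nonneg (1 - G N)
      have h3 : 0 ≤ ((G N * scaledW X N ω * G N) ^ (2 * (q + 1))).trace := by
        obtain ⟨U, h1, h2, h3⟩ := xspec (hH ω)
        rw [xtrpow h1 h2 h3]
        exact Finset.sum_nonneg fun j _ => hp _
      positivity
    have hΨ : ∫ ω, Ψ ω ∂P ≤ (C + 1) * N := by
      have e : ∫ ω, Ψ ω ∂P = ∫ ω, ((G N * scaledW X N ω * G N) ^ (2 * (q + 1))).trace ∂P +
          M * (η * (∫ ω, xfrob (scaledW X N ω) ∂P) + η⁻¹ * xfrob (1 - G N)) := by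
        have hi : Integrable (fun ω => M * (η * xfrob (scaledW X N ω) + η⁻¹ * xfrob (1 - G N))) P :=
          ((hfr.const_mul _).add (integrable_const _)).const_mul _
        simp only [Ψ]
        rw [integral_add htr hi, integral_const_mul,
          integral_add (hfr.const_mul _) (integrable_const _), integral_const_mul]
        simp
      rw [e]
      have h1 := hmain N (G N) (hG N) (hc N) (hd N)
      have h2 := xWfrob hX N
      have h3 : M * (η * (∫ ω, xfrob (scaledW X N ω) ∂P) + η⁻¹ * xfrob (1 - G N)) ≤
          M * (η * (4 * R * N) + η⁻¹ * (ε * N)) := by gcongr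
      have h4 : M * (η * (4 * R * N) + η⁻¹ * (ε * N)) ≤ N := by
        have : M * (η * (4 * R * N) + η⁻¹ * (ε * N)) = (η * (8 * R * M + 1) - η) / 2 * N + (M * (η⁻¹ * ε)) * N := by ring
        rw [this, hη1, hε1]
        nlinarith
      rw [show 2 * (q + 1) = 2 * q + 2 by ring]
      linarith
    have hmk := mul_meas_ge_le_integral_of_nonneg (Eventually.of_forall hΨ0) hΨi (2 * (C + 1) * N)
    have hmk2 : P.real {ω | 2 * (C + 1) * N ≤ Ψ ω} ≤ 1 / 2 := by
      have hpos : 0 < 2 * (C + 1) * N := by positivity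
      have := hmk.trans hΨ
      by_contra hcon
      push Not at hcon
      nlinarith [mul_lt_mul_of_pos_left hcon hpos]
    have hmk3 : P {ω | 2 * (C + 1) * N ≤ Ψ ω} ≤ 1 / 2 := by
      rw [← ENNReal.ofReal_toReal (measure_ne_top P {ω | 2 * (C + 1) * N ≤ Ψ ω})]
      refine (ENNReal.ofReal_le_ofReal hmk2).trans (le_of_eq ?_)
      rw [ENNReal.ofReal_div_of_pos (by norm_num)]; simp
    have hex : ∃ ω, ω ∉ {ω | 2 * (C + 1) * N ≤ Ψ ω} ∧ ω ∉ {ω | 1 ≤ |esdEval (scaledW X N ω) (fun x => min (x ^ (2 * (q + 1))) (K : ℝ)) - ∫ x, min (x ^ (2 * (q + 1))) (K : ℝ) ∂μf|} := by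
      by_contra hcon
      push Not at hcon
      have hsub : (Set.univ : Set Ω) ⊆ {ω | 1 ≤ |esdEval (scaledW X N ω) (fun x => min (x ^ (2 * (q + 1))) (K : ℝ)) - ∫ x, min (x ^ (2 * (q + 1))) (K : ℝ) ∂μf|} ∪ {ω | 2 * (C + 1) * N ≤ Ψ ω} := by
        intro ω _
        by_cases h : ω ∈ {ω | 2 * (C + 1) * N ≤ Ψ ω}
        · exact Or.inr h
        · exact Or.inl (hcon ω h)
      have h1 := (measure_mono (μ := P) hsub).trans (measure_union_le _ _)
      rw [measure_univ] at h1
      have h2 := ENNReal.add_lt_add_of_lt_of_le (ne_top_of_le_ne_top (by simp) hmk3) hN1 hmk3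
      rw [ENNReal.add_halves] at h2
      exact absurd h1 (not_le.mpr h2)
    obtain ⟨ω, hω1, hω2⟩ := hex
    simp only [Set.mem_setOf_eq, not_le] at hω1 hω2
    rw [esdEval, dif_pos (xW_herm N ω)] at hω2
    have hcmp := xcmp (xW_herm (X := X) N ω) (hG N) (hc N) K η (Nat.cast_nonneg K) hη (q + 1) (by omega)
    have h5 : (N:ℝ)⁻¹ * ∑ j, min ((xW_herm (X := X) N ω).eigenvalues j ^ (2 * (q + 1))) (K:ℝ) ≤ 4 ^ (q + 1) * (2 * (C + 1)) := by
      rw [inv_mul_le_iff₀ hNpos]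
      refine hcmp.trans ?_
      have : (4:ℝ) ^ (q + 1) * Ψ ω ≤ 4 ^ (q + 1) * (2 * (C + 1) * N) := by gcongr
      refine this.trans (le_of_eq (by ring))
    have h6 := (abs_lt.mp hω2).1
    linarith
  have hlimK : Tendsto (fun K : ℕ => ∫⁻ x, ENNReal.ofReal (min (x ^ (2 * (q + 1))) (K : ℝ)) ∂μf) atTop
      (nhds (∫⁻ x, ENNReal.ofReal (x ^ (2 * (q + 1))) ∂μf)) := by
    refine lintegral_tendsto_of_tendsto_of_monotone (fun K => by fun_prop) (Eventually.of_forall fun x => ?_)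
      (Eventually.of_forall fun x => ?_)
    · intro K K' h
      apply ENNReal.ofReal_le_ofReal
      exact min_le_min_left _ (by exact_mod_cast h)
    · refine tendsto_const_nhds.congr' ?_
      obtain ⟨n, hn⟩ := exists_nat_ge (x ^ (2 * (q + 1)))
      filter_upwards [eventually_ge_atTop n] with K hK
      rw [min_eq_left]
      exact hn.trans (by exact_mod_cast hK)
  refine lt_of_le_of_lt (le_of_tendsto' hlimK fun K => ?_) (ENNReal.ofReal_lt_top (r := 1 + 4 ^ (q + 1) * (2 * (C + 1))))
  rw [← ofReal_integral_eq_lintegral_ofReal]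
  · exact ENNReal.ofReal_le_ofReal (key K)
  · refine Integrable.of_bound (C := K) (by fun_prop) (Eventually.of_forall fun x => ?_)
    rw [Real.norm_eq_abs, abs_of_nonneg (le_min (hp x) (Nat.cast_nonneg K))]; exact min_le_right _ _
  · exact Eventually.of_forall fun x => le_min (hp x) (Nat.cast_nonneg K)


end
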